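/- arXiv:1302.0517 — 2 statements merged into one kernel-verified Lean document; each statement's English description precedes it below -/
import Mathlib

section
/- Let γ denote the Euler–Mascheroni constant and D = e^{1-γ/2}/√2. For every integer n > 16, every positive integer N, and every n-linear form U : (ℝ^N)^n → ℝ, one has (∑_{i₁,…,iₙ=1}^N |U(e_{i₁},…,e_{iₙ})|^{2n/(n+1)})^{(n+1)/(2n)} ≤ (4/D³) · (n-1)^{log₂ D} · ‖U‖. Consequently the optimal real multilinear Bohnenblust–Hille constant satisfies K_n ≤ (4/D³)(n-1)^{log₂ D} for all n > 16. -/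
open Real

/-- The Bohnenblust--Hille quantity of an `n`-linear form on `ℓ_∞^N` over `ℝ`:
`(∑_{i₁,…,iₙ} |U(e_{i₁},…,e_{iₙ})|^{2n/(n+1)})^{(n+1)/(2n)}`. -/
noncomputable def BHreal (n N : ℕ)
    (U : ContinuousMultilinearMap ℝ (fun _ : Fin n => (Fin N → ℝ)) ℝ) : ℝ :=
  (∑ i : Fin n → Fin N,
      |U (fun k => Pi.single (i k) (1 : ℝ))| ^ ((2 * n : ℝ) / (n + 1)))
    ^ ((n + 1 : ℝ) / (2 * n))

/-- The optimal real multilinear Bohnenblust--Hille constant. -/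
noncomputable def KrealOpt (n : ℕ) : ℝ :=
  sInf {C : ℝ | 1 ≤ C ∧ ∀ N : ℕ, 0 < N →
    ∀ U : ContinuousMultilinearMap ℝ (fun _ : Fin n => (Fin N → ℝ)) ℝ,
      BHreal n N U ≤ C * ‖U‖}

/-!
Blei's inequality bounds the `ℓ_{2n/(n+1)}` norm of an `n`-dimensional array by its mixed norms
with an inner `ℓ_2` norm in one coordinate and an outer `ℓ_p` norm, `p = 2(n-1)/n`, in the others.
Khinchine's inequality replaces the inner `ℓ_2` norm of the coefficients of `U` by an average over
signs `ε`, and each choice of signs produces the coefficients of an `(n-1)`-linear form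
`U(…, ε, …)` of norm at most `‖U‖`. Thus passing from `n - 1` to `n` costs one Khinchine constant.

Haagerup's optimal Khinchine constants are not needed. Since `1 + u ≤ exp u`, the estimate
`𝔼 S² log S² ≤ 1` for normalized Rademacher sums `S` gives `1 ≤ exp(1 - p/2) 𝔼|S|^p` for `p ≤ 2`;
majorizing the logarithm by a cubic polynomial reduces that estimate to the even moments of `S` up
to the eighth. Along the induction these factors accumulate to `exp(H_{n-1}/2)`, where
`H_m = 1 + 1/2 + ⋯ + 1/m`, and for `m ≥ 8` one has `H_m ≤ log m + log 2` and `log D ≥ (log 2)/2`.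
-/

open scoped NNReal ENNReal BigOperators

section Holder

theorem sum_rpow_mul_prod_rpow_le {ι κ : Type*} [Fintype ι] [Fintype κ] (g : ι → ℝ≥0)
    (f : κ → ι → ℝ≥0) {q : ℝ} {p : κ → ℝ} (hqp : q + ∑ k, p k = 1) (hq : 0 ≤ q)
    (hp : ∀ k, 0 ≤ p k) :
    ∑ i, g i ^ q * ∏ k, f k i ^ p k ≤ (∑ i, g i) ^ q * ∏ k, (∑ i, f k i) ^ p k := by
  let _ : MeasurableSpace ι := ⊤
  have h := ENNReal.lintegral_mul_prod_norm_pow_le (μ := MeasureTheory.Measure.count) Finset.univ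
    (g := fun i ↦ (g i : ℝ≥0∞)) (f := fun k i ↦ (f k i : ℝ≥0∞))
    (measurable_of_finite _).aemeasurable (fun _ _ ↦ (measurable_of_finite _).aemeasurable)
    q hqp hq fun k _ ↦ hp k
  simp only [MeasureTheory.lintegral_count, tsum_fintype] at h
  simp only [← ENNReal.ofNNReal_finsetSum, ← ENNReal.coe_rpow_of_nonneg _ hq,
    ← ENNReal.coe_rpow_of_nonneg _ (hp _)] at h
  exact_mod_cast h

theorem sum_mul_prod_rpow_le_of_sum_prod_rpow_le {ι κ : Type*} [Fintype ι] [Fintype κ]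
    (g : ι → ℝ≥0) (f : κ → ι → ℝ≥0) (F : κ → ℝ≥0) {r : ℝ} (hr : 0 < r)
    (h : ∑ i, ∏ k, f k i ^ (1 / r) ≤ ∏ k, F k ^ (1 / r)) :
    ∑ i, g i ^ (1 / (r + 1)) * ∏ k, f k i ^ (1 / (r + 1)) ≤
      (∑ i, g i) ^ (1 / (r + 1)) * ∏ k, F k ^ (1 / (r + 1)) := by
  have hexp : 1 / r * (r / (r + 1)) = 1 / (r + 1) := by field_simp
  have hsplit : 1 / (r + 1) + r / (r + 1) = 1 := by field_simp; ring
  have hpow (u : κ → ℝ≥0) :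
      ∏ k, u k ^ (1 / (r + 1)) = (∏ k, u k ^ (1 / r)) ^ (r / (r + 1)) := by
    simp only [← NNReal.finsetProd_rpow, ← NNReal.rpow_mul, hexp]
  have holder := sum_rpow_mul_prod_rpow_le (κ := Unit) g (fun _ i ↦ ∏ k, f k i ^ (1 / r))
    (q := 1 / (r + 1)) (p := fun _ ↦ r / (r + 1)) (by simpa using hsplit) (by positivity)
    fun _ ↦ by positivity
  simp only [Finset.univ_unique, Finset.prod_singleton] at holder
  simp only [hpow]
  exact holder.trans (by gcongr)

end Holder

section Fin

variable {α : Type*} [Fintype α] {n : ℕ}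

theorem sum_eq_sum_sum_insertNth {M : Type*} [AddCommMonoid M] (j : Fin (n + 1))
    (F : (Fin (n + 1) → α) → M) : ∑ i, F i = ∑ x, ∑ y, F (j.insertNth x y) := by
  rw [← (Fin.insertNthEquiv (fun _ ↦ α) j).sum_comp F, Fintype.sum_prod_type]
  rfl

theorem removeNth_succ_cons {β : Type*} (j : Fin (n + 1)) (x : β) (y : Fin (n + 1) → β) :
    j.succ.removeNth (Fin.cons x y : Fin (n + 2) → β) =
      (Fin.cons x (j.removeNth y) : Fin (n + 1) → β) := by
  funext k
  cases k using Fin.cases <;> simp [Fin.removeNth]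

theorem sum_eq_sum_sum_cons {M : Type*} [AddCommMonoid M] (F : (Fin (n + 1) → α) → M) :
    ∑ i, F i = ∑ x, ∑ y : Fin n → α, F (Fin.cons x y) := by
  simpa only [Fin.insertNth_zero'] using sum_eq_sum_sum_insertNth 0 F

theorem prod_removeNth_cons {M β : Type*} [CommMonoid M] (F : Fin (n + 2) → (Fin (n + 1) → β) → M)
    (x : β) (y : Fin (n + 1) → β) :
    ∏ j, F j (j.removeNth (Fin.cons x y : Fin (n + 2) → β)) =
      F 0 y * ∏ j : Fin (n + 1), F j.succ (Fin.cons x (j.removeNth y)) := by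
  simp only [Fin.prod_univ_succ (n := n + 1), removeNth_succ_cons, Fin.removeNth_zero,
    Fin.tail_cons]

theorem loomis_whitney (f : Fin (n + 2) → (Fin (n + 1) → α) → ℝ≥0) :
    ∑ i : Fin (n + 2) → α, ∏ j, f j (j.removeNth i) ^ (1 / (n + 1) : ℝ) ≤
      ∏ j, (∑ y, f j y) ^ (1 / (n + 1) : ℝ) := by
  induction n with
  | zero =>
    refine le_of_eq ?_
    calc
      _ = ∑ x, ∑ y, f 0 y * f 1 (Fin.cons x default) := by
        rw [sum_eq_sum_sum_cons]
        refine Finset.sum_congr rfl fun x _ ↦ Finset.sum_congr rfl fun y _ ↦ ?_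
        rw [prod_removeNth_cons (fun j y ↦ f j y ^ _)]
        simp [Subsingleton.elim (Fin.removeNth 0 y) default]
      _ = _ := by
        simp [Fin.prod_univ_two, sum_eq_sum_sum_cons (f 1), ← Finset.sum_mul, ← Finset.mul_sum]
  | succ n ih =>
    have hcast : ((n + 1 : ℕ) : ℝ) + 1 = (n + 1 : ℝ) + 1 := by push_cast; ring
    rw [hcast]
    calc
      _ = ∑ x, ∑ y, f 0 y ^ (1 / ((n + 1 : ℝ) + 1)) * ∏ j : Fin (n + 2),
            f j.succ (Fin.cons x (j.removeNth y)) ^ (1 / ((n + 1 : ℝ) + 1)) := by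
        rw [sum_eq_sum_sum_cons]
        exact Finset.sum_congr rfl fun x _ ↦ Finset.sum_congr rfl fun y _ ↦
          prod_removeNth_cons (fun j y ↦ f j y ^ _) x y
      _ ≤ ∑ x, (∑ y, f 0 y) ^ (1 / ((n + 1 : ℝ) + 1)) *
            ∏ j : Fin (n + 2), (∑ z, f j.succ (Fin.cons x z)) ^ (1 / ((n + 1 : ℝ) + 1)) :=
        Finset.sum_le_sum fun x _ ↦ sum_mul_prod_rpow_le_of_sum_prod_rpow_le _ _ _
          (by positivity) (ih fun j z ↦ f j.succ (Fin.cons x z))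
      _ ≤ (∑ y, f 0 y) ^ (1 / ((n + 1 : ℝ) + 1)) *
            ∏ j : Fin (n + 2), (∑ x, ∑ z, f j.succ (Fin.cons x z)) ^ (1 / ((n + 1 : ℝ) + 1)) := by
        rw [← Finset.mul_sum]
        gcongr
        simpa using sum_rpow_mul_prod_rpow_le (q := 0) 0
          (fun (j : Fin (n + 2)) x ↦ ∑ z, f j.succ (Fin.cons x z))
          (p := fun _ ↦ 1 / ((n + 1 : ℝ) + 1)) (by simp; field_simp; ring) le_rfl
          fun _ ↦ by positivity
      _ = _ := by
        simp only [Fin.prod_univ_succ (n := n + 2), sum_eq_sum_sum_cons (f (Fin.succ _))]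

end Fin

/-- The Bohnenblust–Hille exponent `2n / (n + 1)` of `n`-linear forms. -/
noncomputable def bhExponent (n : ℕ) : ℝ := 2 * n / (n + 1)

section Blei

variable {α : Type*} [Fintype α] {n : ℕ}

/-- The sum of an array `b` over the line of all indices that agree with `y` away from the
coordinate `j`. -/
def lineSum (b : (Fin (n + 1) → α) → ℝ≥0) (j : Fin (n + 1)) (y : Fin n → α) : ℝ≥0 :=
  ∑ x, b (j.insertNth x y)

theorem le_lineSum (b : (Fin (n + 1) → α) → ℝ≥0) (j : Fin (n + 1)) (i : Fin (n + 1) → α) :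
    b i ≤ lineSum b j (j.removeNth i) := by
  simpa [lineSum] using Finset.single_le_sum (f := fun x ↦ b (j.insertNth x (j.removeNth i)))
    (fun _ _ ↦ zero_le) (Finset.mem_univ (i j))

theorem sum_mul_lineSum_rpow_neg (b : (Fin (n + 1) → α) → ℝ≥0) (j : Fin (n + 1)) {r : ℝ}
    (hr : r < 1) :
    ∑ i, b i * lineSum b j (j.removeNth i) ^ (-r) = ∑ y, lineSum b j y ^ (1 - r) := by
  rw [sum_eq_sum_sum_insertNth j, Finset.sum_comm]
  refine Finset.sum_congr rfl fun y _ ↦ ?_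
  simp only [Fin.removeNth_insertNth, ← Finset.sum_mul]
  rw [← lineSum, sub_eq_add_neg, NNReal.rpow_one_add' (by linarith)]

theorem rpow_eq_prod_rpow_mul_prod_rpow {κ : Type*} [Fintype κ] {c : ℝ≥0} {s : κ → ℝ≥0}
    (hs : ∀ k, c ≤ s k) (r : ℝ) {t : ℝ} (ht : t ≠ 0) [Nonempty κ] :
    c ^ (Fintype.card κ * t) =
      (∏ k, s k ^ r) ^ t * ∏ k, (c * s k ^ (-r)) ^ t := by
  obtain rfl | hc := eq_or_ne c 0
  · simp [ht, NNReal.zero_rpow]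
  have hfactor (k : κ) : s k ^ r * (c * s k ^ (-r)) = c := by
    have : s k ≠ 0 := (hc.bot_lt.trans_le (hs k)).ne'
    rw [mul_left_comm, ← NNReal.rpow_add this, add_neg_cancel, NNReal.rpow_zero, mul_one]
  rw [NNReal.finsetProd_rpow _ _ t, ← NNReal.mul_rpow, ← Finset.prod_mul_distrib]
  simp only [hfactor, Finset.prod_const, Finset.card_univ, NNReal.rpow_mul, NNReal.rpow_natCast]

theorem sum_prod_lineSum_rpow_le (b : (Fin (n + 2) → α) → ℝ≥0) :
    ∑ i : Fin (n + 2) → α, ∏ j, lineSum b j (j.removeNth i) ^ (1 / (n + 2) : ℝ) ≤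
      ∏ j, (∑ y, lineSum b j y ^ ((n + 1) / (n + 2) : ℝ)) ^ (1 / (n + 1) : ℝ) := by
  have hexp : ((n + 1) / (n + 2) * (1 / (n + 1)) : ℝ) = 1 / (n + 2) := by field_simp
  simpa only [← NNReal.rpow_mul, hexp] using
    loomis_whitney fun j y ↦ lineSum b j y ^ ((n + 1) / (n + 2) : ℝ)

-- Blei's inequality. Write `b i = s_j ^ r * (b i * s_j ^ (-r))` with `r = 1 / (n + 2)` and `s_j`
-- the line sum through `i` in direction `j`, and multiply over `j`. After Hölder, Loomis–Whitney
-- handles the first factors, while the second ones sum up along the lines.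
theorem sum_rpow_le_prod_sum_lineSum_rpow (b : (Fin (n + 2) → α) → ℝ≥0) :
    ∑ i, b i ^ ((n + 2) / (n + 3) : ℝ) ≤
      ∏ j, (∑ y, lineSum b j y ^ ((n + 1) / (n + 2) : ℝ)) ^
        ((n + 2) / ((n + 1) * (n + 3)) : ℝ) := by
  have hr : (1 / (n + 2) : ℝ) < 1 := by
    rw [div_lt_one (by positivity)]
    linarith [n.cast_nonneg (α := ℝ)]
  have hsub : (1 - 1 / (n + 2) : ℝ) = (n + 1) / (n + 2) := by field_simp; ring
  have hadd : (1 / (n + 1) * (1 / (n + 3)) + 1 / (n + 3) : ℝ) =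
      (n + 2) / ((n + 1) * (n + 3)) := by field_simp; ring
  have hcard : ((n + 2) / (n + 3) : ℝ) = Fintype.card (Fin (n + 2)) * (1 / (n + 3)) := by
    rw [Fintype.card_fin]; push_cast; ring
  calc
    _ = ∑ i : Fin (n + 2) → α,
          (∏ j, lineSum b j (j.removeNth i) ^ (1 / (n + 2) : ℝ)) ^ (1 / (n + 3) : ℝ) *
            ∏ j, (b i * lineSum b j (j.removeNth i) ^ (-(1 / (n + 2)) : ℝ)) ^
              (1 / (n + 3) : ℝ) := by
      refine Finset.sum_congr rfl fun i _ ↦ ?_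
      rw [hcard]
      exact rpow_eq_prod_rpow_mul_prod_rpow (fun j ↦ le_lineSum b j i) _ (by positivity)
    _ ≤ (∑ i : Fin (n + 2) → α, ∏ j, lineSum b j (j.removeNth i) ^ (1 / (n + 2) : ℝ)) ^
            (1 / (n + 3) : ℝ) *
          ∏ j, (∑ i : Fin (n + 2) → α, b i * lineSum b j (j.removeNth i) ^ (-(1 / (n + 2)) : ℝ)) ^
            (1 / (n + 3) : ℝ) :=
      sum_rpow_mul_prod_rpow_le _ (fun j i ↦ b i * lineSum b j (j.removeNth i) ^ _)
        (by simp; field_simp; ring) (by positivity) fun _ ↦ by positivity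
    _ ≤ (∏ j, (∑ y, lineSum b j y ^ ((n + 1) / (n + 2) : ℝ)) ^ (1 / (n + 1) : ℝ)) ^
            (1 / (n + 3) : ℝ) *
          ∏ j, (∑ y, lineSum b j y ^ ((n + 1) / (n + 2) : ℝ)) ^ (1 / (n + 3) : ℝ) := by
      simp only [sum_mul_lineSum_rpow_neg b _ hr, hsub]
      gcongr
      exact sum_prod_lineSum_rpow_le b
    _ = _ := by
      rw [← NNReal.finsetProd_rpow, ← Finset.prod_mul_distrib]
      refine Finset.prod_congr rfl fun j _ ↦ ?_
      rw [← NNReal.rpow_mul, ← NNReal.rpow_add_of_nonneg _ (by positivity) (by positivity), hadd]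

theorem sum_rpow_le_of_forall_sum_lineSum_rpow_le {b : (Fin (n + 2) → α) → ℝ≥0} {M : ℝ≥0}
    (h : ∀ j, ∑ y, lineSum b j y ^ ((n + 1) / (n + 2) : ℝ) ≤ M ^ ((n + 1) / (n + 2) : ℝ)) :
    ∑ i, b i ^ ((n + 2) / (n + 3) : ℝ) ≤ M ^ ((n + 2) / (n + 3) : ℝ) := by
  calc
    _ ≤ ∏ j, (∑ y, lineSum b j y ^ ((n + 1) / (n + 2) : ℝ)) ^
          ((n + 2) / ((n + 1) * (n + 3)) : ℝ) := sum_rpow_le_prod_sum_lineSum_rpow b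
    _ ≤ ∏ _j : Fin (n + 2), (M ^ ((n + 1) / (n + 2) : ℝ)) ^
          ((n + 2) / ((n + 1) * (n + 3)) : ℝ) := by
      gcongr with j
      exact h j
    _ = _ := by
      rw [Finset.prod_const, Finset.card_univ, Fintype.card_fin, ← NNReal.rpow_mul,
        ← NNReal.rpow_mul_natCast]
      congr 1
      push_cast
      field_simp

theorem sum_abs_rpow_bhExponent_le {a : (Fin (n + 2) → α) → ℝ} {K : ℝ} (hK : 0 ≤ K)
    (h : ∀ j : Fin (n + 2), ∑ y : Fin (n + 1) → α,
      (∑ x, a (j.insertNth x y) ^ 2) ^ (bhExponent (n + 1) / 2) ≤ K ^ bhExponent (n + 1)) :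
    ∑ i, |a i| ^ bhExponent (n + 2) ≤ K ^ bhExponent (n + 2) := by
  lift K to ℝ≥0 using hK
  have hexp₁ : bhExponent (n + 1) = 2 * ((n + 1) / (n + 2)) := by
    simp only [bhExponent]; push_cast; ring
  have hexp₂ : bhExponent (n + 2) = 2 * ((n + 2) / (n + 3)) := by
    simp only [bhExponent]; push_cast; ring
  have hline (j : Fin (n + 2)) (y : Fin (n + 1) → α) :
      ∑ x, a (j.insertNth x y) ^ 2 = lineSum (fun i ↦ ‖a i‖₊ ^ 2) j y := by
    simp [lineSum]
  have hsq : ∀ j, ∑ y, lineSum (fun i ↦ ‖a i‖₊ ^ 2) j y ^ ((n + 1) / (n + 2) : ℝ) ≤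
      (K ^ 2) ^ ((n + 1) / (n + 2) : ℝ) := fun j ↦ by
    have hj := h j
    simp only [hline, hexp₁, mul_div_cancel_left₀ _ (two_ne_zero (α := ℝ)),
      Real.rpow_mul K.coe_nonneg, Real.rpow_two] at hj
    exact_mod_cast hj
  have hconcl := sum_rpow_le_of_forall_sum_lineSum_rpow_le hsq
  simp only [hexp₂, Real.rpow_mul (abs_nonneg _), Real.rpow_mul K.coe_nonneg, Real.rpow_two]
  simp only [← Real.norm_eq_abs, ← coe_nnnorm]
  exact_mod_cast hconcl

end Blei

section Rademacher

/-- The Rademacher sum `∑ i, ε i * a i` with coefficients `a`, as a function of the signs `ε`;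
expectations are averages over all `ε : ι → ℤˣ`. -/
def rademacherSum {ι : Type*} [Fintype ι] (a : ι → ℝ) (ε : ι → ℤˣ) : ℝ :=
  ∑ i, ((ε i : ℤ) : ℝ) * a i

theorem expect_rademacherSum_comp_equiv {ι κ : Type*} [Fintype ι] [Fintype κ] [DecidableEq ι]
    [DecidableEq κ] (e : κ ≃ ι) (a : ι → ℝ) (φ : ℝ → ℝ) :
    𝔼 ε, φ (rademacherSum (a ∘ e) ε) = 𝔼 ε, φ (rademacherSum a ε) := by
  refine Fintype.expect_equiv (e.arrowCongr (Equiv.refl ℤˣ)) _ _ fun ε ↦ ?_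
  simp only [rademacherSum, Equiv.arrowCongr_apply, Equiv.coe_refl, Function.comp_apply, id]
  rw [← e.sum_comp]
  simp

theorem rademacherSum_div {ι : Type*} [Fintype ι] (a : ι → ℝ) (c : ℝ) (ε : ι → ℤˣ) :
    rademacherSum (fun i ↦ a i / c) ε = rademacherSum a ε / c := by
  simp only [rademacherSum, Finset.sum_div, mul_div_assoc]

variable {N : ℕ}

theorem expect_rademacherSum_succ (a : Fin (N + 1) → ℝ) (φ : ℝ → ℝ) :
    𝔼 ε, φ (rademacherSum a ε) =
      𝔼 ε, (φ (a 0 + rademacherSum (Fin.tail a) ε) +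
        φ (-a 0 + rademacherSum (Fin.tail a) ε)) / 2 := by
  have hcons (u : ℤˣ) (ε : Fin N → ℤˣ) : rademacherSum a (Fin.cons u ε) =
      ((u : ℤ) : ℝ) * a 0 + rademacherSum (Fin.tail a) ε := by
    simp [rademacherSum, Fin.sum_univ_succ, Fin.tail]
  calc
    _ = 𝔼 z : ℤˣ × (Fin N → ℤˣ), φ (rademacherSum a (Fin.cons z.1 z.2)) :=
      (Fintype.expect_equiv (Fin.consEquiv fun _ ↦ ℤˣ) _ _ fun _ ↦ rfl).symm
    _ = 𝔼 u : ℤˣ, 𝔼 ε, φ (rademacherSum a (Fin.cons u ε)) := by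
      rw [← Finset.univ_product_univ, Finset.expect_product]
    _ = _ := by
      rw [Finset.expect_comm]
      refine Finset.expect_congr rfl fun ε _ ↦ ?_
      rw [Fintype.expect_eq_sum_div_card]
      simp [hcons]

theorem expect_rademacherSum_sq (a : Fin N → ℝ) :
    𝔼 ε, rademacherSum a ε ^ 2 = ∑ i, a i ^ 2 := by
  induction N with
  | zero => simp [rademacherSum]
  | succ N ih =>
    rw [expect_rademacherSum_succ a (· ^ 2), Fin.sum_univ_succ]
    calc
      _ = 𝔼 ε, (a 0 ^ 2 + rademacherSum (Fin.tail a) ε ^ 2) :=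
        Finset.expect_congr rfl fun ε _ ↦ by ring
      _ = _ := by
        simp only [Finset.expect_add_distrib, Fintype.expect_const, ih, Fin.tail]

theorem expect_rademacherSum_pow_four (a : Fin N → ℝ) :
    𝔼 ε, rademacherSum a ε ^ 4 = 3 * (∑ i, a i ^ 2) ^ 2 - 2 * ∑ i, a i ^ 4 := by
  induction N with
  | zero => simp [rademacherSum]
  | succ N ih =>
    rw [expect_rademacherSum_succ a (· ^ 4)]
    simp only [Fin.sum_univ_succ]
    calc
      _ = 𝔼 ε, (a 0 ^ 4 + 6 * a 0 ^ 2 * rademacherSum (Fin.tail a) ε ^ 2 +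
            rademacherSum (Fin.tail a) ε ^ 4) :=
        Finset.expect_congr rfl fun ε _ ↦ by ring
      _ = _ := by
        simp only [Finset.expect_add_distrib, Fintype.expect_const, ← Finset.mul_expect, ih,
          expect_rademacherSum_sq, Fin.tail]
        ring

theorem expect_rademacherSum_pow_six (a : Fin N → ℝ) :
    𝔼 ε, rademacherSum a ε ^ 6 =
      15 * (∑ i, a i ^ 2) ^ 3 - 30 * (∑ i, a i ^ 2) * (∑ i, a i ^ 4) + 16 * ∑ i, a i ^ 6 := by
  induction N with
  | zero => simp [rademacherSum]
  | succ N ih =>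
    rw [expect_rademacherSum_succ a (· ^ 6)]
    simp only [Fin.sum_univ_succ]
    calc
      _ = 𝔼 ε, (a 0 ^ 6 + 15 * a 0 ^ 4 * rademacherSum (Fin.tail a) ε ^ 2 +
            15 * a 0 ^ 2 * rademacherSum (Fin.tail a) ε ^ 4 +
            rademacherSum (Fin.tail a) ε ^ 6) :=
        Finset.expect_congr rfl fun ε _ ↦ by ring
      _ = _ := by
        simp only [Finset.expect_add_distrib, Fintype.expect_const, ← Finset.mul_expect, ih,
          expect_rademacherSum_sq, expect_rademacherSum_pow_four, Fin.tail]
        ring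

theorem expect_rademacherSum_pow_eight (a : Fin N → ℝ) :
    𝔼 ε, rademacherSum a ε ^ 8 =
      105 * (∑ i, a i ^ 2) ^ 4 - 420 * (∑ i, a i ^ 2) ^ 2 * (∑ i, a i ^ 4) +
        448 * (∑ i, a i ^ 2) * (∑ i, a i ^ 6) + 140 * (∑ i, a i ^ 4) ^ 2 -
          272 * ∑ i, a i ^ 8 := by
  induction N with
  | zero => simp [rademacherSum]
  | succ N ih =>
    rw [expect_rademacherSum_succ a (· ^ 8)]
    simp only [Fin.sum_univ_succ]
    calc
      _ = 𝔼 ε, (a 0 ^ 8 + 28 * a 0 ^ 6 * rademacherSum (Fin.tail a) ε ^ 2 +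
            70 * a 0 ^ 4 * rademacherSum (Fin.tail a) ε ^ 4 +
            28 * a 0 ^ 2 * rademacherSum (Fin.tail a) ε ^ 6 +
            rademacherSum (Fin.tail a) ε ^ 8) :=
        Finset.expect_congr rfl fun ε _ ↦ by ring
      _ = _ := by
        simp only [Finset.expect_add_distrib, Fintype.expect_const, ← Finset.mul_expect, ih,
          expect_rademacherSum_sq, expect_rademacherSum_pow_four, expect_rademacherSum_pow_six,
          Fin.tail]
        ring

end Rademacher

section LogMajorant

/-- A cubic majorant of `log` on `(0, ∞)`. It turns bounds on `𝔼 S² log S²` into bounds on the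
moments of `S` of order at most `8`. -/
noncomputable def logMajorant (x : ℝ) : ℝ := (x ^ 3 / 3 - 15 / 2 * x ^ 2 + 66 * x) / 80 - 3 / 5

theorem hasDerivAt_logMajorant_sub_log {x : ℝ} (hx : 0 < x) :
    HasDerivAt (fun y ↦ logMajorant y - log y) ((x - 2) * (x - 5) * (x - 8) / (80 * x)) x := by
  have hcubic := ((((hasDerivAt_pow 3 x).div_const 3).sub
    ((hasDerivAt_pow 2 x).const_mul (15 / 2))).add ((hasDerivAt_id x).const_mul 66)).div_const 80
  refine ((hcubic.sub_const (3 / 5)).sub (hasDerivAt_log hx.ne')).congr_deriv ?_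
  field_simp
  push_cast
  ring

theorem log_le_logMajorant {x : ℝ} (hx : 0 < x) : log x ≤ logMajorant x := by
  have hderiv {y : ℝ} (hy : 0 < y) := (hasDerivAt_logMajorant_sub_log hy).deriv
  have hcont {y : ℝ} (hy : 0 < y) := (hasDerivAt_logMajorant_sub_log hy).continuousAt
  have hdiff {s : Set ℝ} (hs : ∀ y ∈ s, 0 < y) :
      DifferentiableOn ℝ (fun y ↦ logMajorant y - log y) s := fun y hy ↦
    (hasDerivAt_logMajorant_sub_log (hs y hy)).differentiableAt.differentiableWithinAt
  have log_eight : log 8 = 3 * log 2 := by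
    rw [show (8 : ℝ) = 2 ^ 3 by norm_num, log_pow, Nat.cast_ofNat]
  suffices 0 ≤ logMajorant x - log x by linarith
  rcases le_total x 5 with hx5 | hx5
  · have hmin : IsMinOn (fun y ↦ logMajorant y - log y) (Set.Ioc 0 5) 2 := by
      refine isMinOn_Ioc_of_deriv (hcont two_pos) (hcont (by norm_num))
        (hdiff fun y hy ↦ hy.1) (hdiff fun y hy ↦ two_pos.trans hy.1) (fun y hy ↦ ?_) fun y hy ↦ ?_
      · rw [hderiv hy.1]
        refine div_nonpos_of_nonpos_of_nonneg ?_ (by linarith [hy.1])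
        refine mul_nonpos_of_nonneg_of_nonpos ?_ (by linarith [hy.2])
        exact mul_nonneg_of_nonpos_of_nonpos (by linarith [hy.2]) (by linarith [hy.2])
      · rw [hderiv (two_pos.trans hy.1)]
        refine div_nonneg ?_ (by linarith [hy.1])
        refine mul_nonneg_of_nonpos_of_nonpos ?_ (by linarith [hy.2])
        exact mul_nonpos_of_nonneg_of_nonpos (by linarith [hy.1]) (by linarith [hy.2])
    refine le_trans ?_ (hmin ⟨hx, hx5⟩)
    norm_num [logMajorant]
    linarith [log_two_lt_d9]
  · have hmin : IsMinOn (fun y ↦ logMajorant y - log y) (Set.Ici 5) 8 := by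
      refine isMinOn_Ici_of_deriv (hcont (by norm_num)) (hcont (by norm_num))
        (hdiff fun y hy ↦ by linarith [hy.1]) (hdiff fun y hy ↦ by linarith [Set.mem_Ioi.1 hy])
        (fun y hy ↦ ?_) fun y hy ↦ ?_
      · rw [hderiv (by linarith [hy.1])]
        refine div_nonpos_of_nonpos_of_nonneg ?_ (by linarith [hy.1])
        refine mul_nonpos_of_nonneg_of_nonpos ?_ (by linarith [hy.2])
        exact mul_nonneg (by linarith [hy.1]) (by linarith [hy.1])
      · rw [Set.mem_Ioi] at hy
        rw [hderiv (by linarith)]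
        refine div_nonneg (mul_nonneg (mul_nonneg ?_ ?_) ?_) ?_ <;> linarith
    refine le_trans ?_ (hmin hx5)
    norm_num [logMajorant, log_eight]
    linarith [log_two_lt_d9]

end LogMajorant

section Khinchine

theorem sum_pow_four_le_one {ι : Type*} [Fintype ι] {a : ι → ℝ} (ha : ∑ i, a i ^ 2 = 1) :
    ∑ i, a i ^ 4 ≤ 1 := by
  simpa [ha, ← pow_mul] using
    Finset.sum_sq_le_sq_sum_of_nonneg (s := Finset.univ) (f := fun i ↦ a i ^ 2)
      fun _ _ ↦ sq_nonneg _

-- The quadratic `272 / 3 * u ^ 2 - 88 / 3 * u + 12 / 5` in `u = a i ^ 2` has negative discriminant.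
theorem sum_pow_six_le {ι : Type*} [Fintype ι] (a : ι → ℝ) :
    88 / 3 * ∑ i, a i ^ 6 ≤ 12 / 5 * ∑ i, a i ^ 4 + 272 / 3 * ∑ i, a i ^ 8 := by
  simp only [Finset.mul_sum, ← Finset.sum_add_distrib]
  refine Finset.sum_le_sum fun i _ ↦ ?_
  nlinarith [mul_nonneg (sq_nonneg (a i ^ 2)) (sq_nonneg (a i ^ 2 - 11 / 68)), sq_nonneg (a i ^ 2)]

variable {N : ℕ} {a : Fin N → ℝ}

theorem expect_sq_mul_log_sq_rademacherSum_le (ha : ∑ i, a i ^ 2 = 1) :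
    𝔼 ε, rademacherSum a ε ^ 2 * log (rademacherSum a ε ^ 2) ≤ 1 := by
  have hmajorant (t : ℝ) :
      t ^ 2 * log (t ^ 2) ≤ 1 / 240 * t ^ 8 - 3 / 32 * t ^ 6 + 33 / 40 * t ^ 4 - 3 / 5 * t ^ 2 := by
    rcases eq_or_ne t 0 with rfl | ht
    · simp
    have hlog := log_le_logMajorant (sq_pos_of_ne_zero ht)
    refine (mul_le_mul_of_nonneg_left hlog (sq_nonneg t)).trans_eq ?_
    rw [logMajorant]
    ring
  have hfour : (∑ i, a i ^ 4) ^ 2 ≤ ∑ i, a i ^ 4 :=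
    pow_le_of_le_one (by positivity) (sum_pow_four_le_one ha) two_ne_zero
  calc
    _ ≤ 𝔼 ε, (1 / 240 * rademacherSum a ε ^ 8 - 3 / 32 * rademacherSum a ε ^ 6 +
          33 / 40 * rademacherSum a ε ^ 4 - 3 / 5 * rademacherSum a ε ^ 2) :=
      Finset.expect_le_expect fun ε _ ↦ hmajorant _
    _ ≤ 1 := by
      simp only [Finset.expect_sub_distrib, Finset.expect_add_distrib, ← Finset.mul_expect,
        expect_rademacherSum_sq, expect_rademacherSum_pow_four, expect_rademacherSum_pow_six,
        expect_rademacherSum_pow_eight, ha]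
      linarith [sum_pow_six_le a, sum_pow_four_le_one ha]

theorem exp_mul_sq_sub_le_abs_rpow (p t : ℝ) :
    exp (-(1 - p / 2)) * (t ^ 2 - (1 - p / 2) * (t ^ 2 * log (t ^ 2) - t ^ 2)) ≤ |t| ^ p := by
  rcases eq_or_ne t 0 with rfl | ht
  · simpa using rpow_nonneg le_rfl p
  have habs : |t| ^ p = t ^ 2 * exp (-(1 - p / 2) * log (t ^ 2)) := by
    rw [rpow_def_of_pos (abs_pos.2 ht), ← sq_abs, log_pow, Nat.cast_ofNat]
    nth_rw 2 [← exp_log (abs_pos.2 ht)]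
    rw [← exp_nat_mul, ← exp_add]
    congr 1
    push_cast
    ring
  calc
    _ = exp (-(1 - p / 2)) * (t ^ 2 * (-(1 - p / 2) * (log (t ^ 2) - 1) + 1)) := by ring
    _ ≤ exp (-(1 - p / 2)) * (t ^ 2 * exp (-(1 - p / 2) * (log (t ^ 2) - 1))) := by
      gcongr
      exact add_one_le_exp _
    _ = _ := by
      rw [habs, mul_left_comm, ← exp_add]
      congr 2
      ring

theorem exp_le_expect_abs_rademacherSum_rpow (ha : ∑ i, a i ^ 2 = 1) {p : ℝ} (hp : p ≤ 2) :
    exp (-(1 - p / 2)) ≤ 𝔼 ε, |rademacherSum a ε| ^ p := by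
  calc
    _ ≤ exp (-(1 - p / 2)) * (𝔼 ε, rademacherSum a ε ^ 2 - (1 - p / 2) *
          (𝔼 ε, rademacherSum a ε ^ 2 * log (rademacherSum a ε ^ 2) -
            𝔼 ε, rademacherSum a ε ^ 2)) := by
      refine le_mul_of_one_le_right (exp_nonneg _) ?_
      rw [expect_rademacherSum_sq, ha]
      nlinarith [expect_sq_mul_log_sq_rademacherSum_le ha]
    _ = 𝔼 ε, exp (-(1 - p / 2)) * (rademacherSum a ε ^ 2 - (1 - p / 2) *
          (rademacherSum a ε ^ 2 * log (rademacherSum a ε ^ 2) - rademacherSum a ε ^ 2)) := by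
      simp only [← Finset.mul_expect, Finset.expect_sub_distrib]
    _ ≤ _ := Finset.expect_le_expect fun ε _ ↦ exp_mul_sq_sub_le_abs_rpow p _

theorem khinchine {ι : Type*} [Fintype ι] [DecidableEq ι] (a : ι → ℝ) {p : ℝ} (hp₀ : 0 < p)
    (hp₂ : p ≤ 2) :
    (∑ i, a i ^ 2) ^ (p / 2) ≤ exp (1 - p / 2) * 𝔼 ε, |rademacherSum a ε| ^ p := by
  set s := ∑ i, a i ^ 2
  rcases (by positivity : 0 ≤ s).eq_or_lt with h₀ | h₀
  · rw [← h₀, zero_rpow (by positivity)]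
    exact mul_nonneg (exp_nonneg _) (Finset.expect_nonneg fun _ _ ↦ by positivity)
  let e := (Fintype.equivFin ι).symm
  have hnorm : ∑ k, ((fun i ↦ a i / √s) ∘ e) k ^ 2 = 1 := by
    refine (e.sum_comp fun i ↦ (a i / √s) ^ 2).trans ?_
    simp only [div_pow, sq_sqrt h₀.le, ← Finset.sum_div]
    exact div_self h₀.ne'
  have hunit := exp_le_expect_abs_rademacherSum_rpow hnorm hp₂
  rw [expect_rademacherSum_comp_equiv e _ fun t ↦ |t| ^ p] at hunit
  simp only [rademacherSum_div, abs_div, abs_of_nonneg (sqrt_nonneg s),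
    div_rpow (abs_nonneg _) (sqrt_nonneg s), ← Finset.expect_div] at hunit
  rw [sqrt_eq_rpow, ← rpow_mul h₀.le, one_div_mul_eq_div, le_div_iff₀ (by positivity)] at hunit
  calc
    _ = exp (1 - p / 2) * (exp (-(1 - p / 2)) * s ^ (p / 2)) := by
      rw [← mul_assoc, ← exp_add, add_neg_cancel, exp_zero, one_mul]
    _ ≤ _ := by gcongr

end Khinchine

section BohnenblustHille

variable {ι : Type*} [Fintype ι] {n : ℕ}

theorem bhExponent_pos (hn : n ≠ 0) : 0 < bhExponent n := by
  rw [bhExponent]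
  positivity

theorem bhExponent_le_two (n : ℕ) : bhExponent n ≤ 2 := by
  rw [bhExponent, div_le_iff₀ (by positivity)]
  linarith

theorem exp_mul_exp_harmonic_rpow_bhExponent (n : ℕ) :
    exp (1 - bhExponent (n + 1) / 2) * exp (harmonic n / 2) ^ bhExponent (n + 1) =
      exp (harmonic (n + 1) / 2) ^ bhExponent (n + 1) := by
  rw [← exp_mul, ← exp_mul, ← exp_add, harmonic_succ, bhExponent]
  congr 1
  push_cast
  field_simp
  ring

theorem sum_lines_rpow_le_of_forall_signs {c : (Fin (n + 2) → ι) → ℝ} {p K : ℝ} (hp₀ : 0 < p)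
    (hp₂ : p ≤ 2) (j : Fin (n + 2))
    (h : ∀ ε : ι → ℤˣ, ∑ y, |rademacherSum (fun x ↦ c (j.insertNth x y)) ε| ^ p ≤ K) :
    ∑ y, (∑ x, c (j.insertNth x y) ^ 2) ^ (p / 2) ≤ exp (1 - p / 2) * K := by
  classical
  calc
    _ ≤ ∑ y, exp (1 - p / 2) *
          𝔼 ε, |rademacherSum (fun x ↦ c (j.insertNth x y)) ε| ^ p :=
      Finset.sum_le_sum fun y _ ↦ khinchine _ hp₀ hp₂
    _ = exp (1 - p / 2) *
          𝔼 ε, ∑ y, |rademacherSum (fun x ↦ c (j.insertNth x y)) ε| ^ p := by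
      rw [← Finset.mul_sum, Finset.expect_sum_comm]
    _ ≤ exp (1 - p / 2) * K := by
      gcongr
      exact Finset.expect_le Finset.univ_nonempty fun ε _ ↦ h ε

theorem norm_signs_le_one (ε : ι → ℤˣ) : ‖fun x ↦ ((ε x : ℤ) : ℝ)‖ ≤ 1 := by
  refine (pi_norm_le_iff_of_nonneg zero_le_one).2 fun x ↦ ?_
  rcases Int.units_eq_one_or (ε x) with h | h <;> simp [h]

theorem norm_curryMid_apply_le {𝕜 G : Type*} {E : Fin (n + 1) → Type*}
    [NontriviallyNormedField 𝕜] [∀ k, NormedAddCommGroup (E k)] [∀ k, NormedSpace 𝕜 (E k)]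
    [NormedAddCommGroup G] [NormedSpace 𝕜 G] (f : ContinuousMultilinearMap 𝕜 E G)
    (j : Fin (n + 1)) {v : E j} (hv : ‖v‖ ≤ 1) : ‖f.curryMid j v‖ ≤ ‖f‖ := by
  simpa only [ContinuousMultilinearMap.norm_curryMid, mul_one] using
    (f.curryMid j).le_opNorm_of_le hv

variable [DecidableEq ι]

/-- The coefficient `U (e_{i₁}, …, e_{iₙ})` of an `n`-linear form in the canonical basis. -/
def basisCoeff (U : ContinuousMultilinearMap ℝ (fun _ : Fin n ↦ ι → ℝ) ℝ) (i : Fin n → ι) : ℝ :=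
  U fun k ↦ Pi.single (i k) 1

theorem basisCoeff_curryMid (U : ContinuousMultilinearMap ℝ (fun _ : Fin (n + 1) ↦ ι → ℝ) ℝ)
    (j : Fin (n + 1)) (v : ι → ℝ) (y : Fin n → ι) :
    basisCoeff (U.curryMid j v) y = ∑ x, v x * basisCoeff U (j.insertNth x y) := by
  have hsingle (x : ι) :
      basisCoeff (U.curryMid j (Pi.single x 1)) y = basisCoeff U (j.insertNth x y) := by
    rw [basisCoeff, basisCoeff, ContinuousMultilinearMap.curryMid_apply]
    congr 1
    ext k : 1
    cases k using j.succAboveCases <;> simp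
  conv_lhs => rw [pi_eq_sum_univ' v, map_sum]
  rw [basisCoeff, sum_apply]
  simp only [map_smul, smul_apply, smul_eq_mul]
  exact Finset.sum_congr rfl fun x _ ↦ by rw [← hsingle, basisCoeff]

theorem abs_basisCoeff_le_norm (U : ContinuousMultilinearMap ℝ (fun _ : Fin n ↦ ι → ℝ) ℝ)
    (i : Fin n → ι) : |basisCoeff U i| ≤ ‖U‖ := by
  simpa [basisCoeff, Pi.norm_single] using U.le_opNorm fun k ↦ Pi.single (i k) 1

theorem sum_abs_basisCoeff_le_norm (U : ContinuousMultilinearMap ℝ (fun _ : Fin 1 ↦ ι → ℝ) ℝ) :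
    ∑ i, |basisCoeff U i| ≤ ‖U‖ := by
  let c (x : ι) : ℝ := basisCoeff U (Fin.insertNth 0 x default)
  let v (x : ι) : ℝ := SignType.sign (c x)
  have hv : ‖v‖ ≤ 1 := by
    refine (pi_norm_le_iff_of_nonneg zero_le_one).2 fun x ↦ ?_
    rcases lt_trichotomy (c x) 0 with h | h | h <;> simp [v, h]
  calc
    _ = ∑ x, |c x| := by
      rw [sum_eq_sum_sum_insertNth 0, Finset.sum_congr rfl fun x _ ↦ Fintype.sum_unique _]
    _ = basisCoeff (U.curryMid 0 v) default := by
      rw [basisCoeff_curryMid]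
      exact Finset.sum_congr rfl fun x _ ↦ (sign_mul_self (c x)).symm
    _ ≤ |basisCoeff (U.curryMid 0 v) default| := le_abs_self _
    _ ≤ ‖U.curryMid 0 v‖ := abs_basisCoeff_le_norm _ _
    _ ≤ ‖U‖ := norm_curryMid_apply_le U 0 hv

theorem basisCoeff_curryMid_signs (U : ContinuousMultilinearMap ℝ (fun _ : Fin (n + 1) ↦ ι → ℝ) ℝ)
    (j : Fin (n + 1)) (ε : ι → ℤˣ) (y : Fin n → ι) :
    basisCoeff (U.curryMid j fun x ↦ ((ε x : ℤ) : ℝ)) y =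
      rademacherSum (fun x ↦ basisCoeff U (j.insertNth x y)) ε :=
  basisCoeff_curryMid U j _ y

theorem bohnenblust_hille (U : ContinuousMultilinearMap ℝ (fun _ : Fin (n + 1) ↦ ι → ℝ) ℝ) :
    ∑ i, |basisCoeff U i| ^ bhExponent (n + 1) ≤
      (exp (harmonic n / 2) * ‖U‖) ^ bhExponent (n + 1) := by
  induction n with
  | zero =>
    have hexp : bhExponent (0 + 1) = 1 := by norm_num [bhExponent]
    simpa [hexp] using sum_abs_basisCoeff_le_norm U
  | succ n ih =>
    refine sum_abs_rpow_bhExponent_le (by positivity) fun j ↦ ?_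
    have hsigns (ε : ι → ℤˣ) :
        ∑ y, |rademacherSum (fun x ↦ basisCoeff U (j.insertNth x y)) ε| ^ bhExponent (n + 1) ≤
          (exp (harmonic n / 2) * ‖U‖) ^ bhExponent (n + 1) := by
      simp only [← basisCoeff_curryMid_signs]
      refine (ih _).trans ?_
      gcongr
      · exact (bhExponent_pos n.succ_ne_zero).le
      · exact norm_curryMid_apply_le U j (norm_signs_le_one ε)
    calc
      _ ≤ exp (1 - bhExponent (n + 1) / 2) *
            (exp (harmonic n / 2) * ‖U‖) ^ bhExponent (n + 1) :=
        sum_lines_rpow_le_of_forall_signs (bhExponent_pos n.succ_ne_zero) (bhExponent_le_two _) j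
          hsigns
      _ = _ := by
        rw [mul_rpow (exp_nonneg _) (norm_nonneg _), mul_rpow (exp_nonneg _) (norm_nonneg _),
          ← mul_assoc, exp_mul_exp_harmonic_rpow_bhExponent]

theorem BHreal_le_exp_harmonic_mul_norm {N : ℕ} (hn : n ≠ 0)
    (U : ContinuousMultilinearMap ℝ (fun _ : Fin n ↦ Fin N → ℝ) ℝ) :
    BHreal n N U ≤ exp (harmonic (n - 1) / 2) * ‖U‖ := by
  obtain ⟨m, rfl⟩ := Nat.exists_eq_succ_of_ne_zero hn
  have hpos := bhExponent_pos hn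
  calc
    _ = (∑ i, |basisCoeff U i| ^ bhExponent (m + 1)) ^ (bhExponent (m + 1))⁻¹ := by
      rw [bhExponent, inv_div]
      rfl
    _ ≤ ((exp (harmonic m / 2) * ‖U‖) ^ bhExponent (m + 1)) ^ (bhExponent (m + 1))⁻¹ := by
      gcongr
      exact bohnenblust_hille U
    _ = _ := rpow_rpow_inv (by positivity) hpos.ne'

end BohnenblustHille

section Constants

theorem eulerMascheroniConstant_lt_two_sub_two_mul_log_two :
    eulerMascheroniConstant < 2 - 2 * log 2 := by
  have log_sixteen : log 16 = 4 * log 2 := by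
    rw [show (16 : ℝ) = 2 ^ 4 by norm_num, log_pow, Nat.cast_ofNat]
  have hharmonic : harmonic 16 = 2436559 / 720720 := by
    norm_num [harmonic, Finset.sum_range_succ]
  have h := eulerMascheroniConstant_lt_eulerMascheroniSeq' 16
  norm_num [eulerMascheroniSeq', hharmonic, log_sixteen] at h
  linarith [log_two_gt_d9]

theorem harmonic_le_log_add_log_two {m : ℕ} (hm : 8 ≤ m) : (harmonic m : ℝ) ≤ log m + log 2 := by
  have log_eight : log 8 = 3 * log 2 := by
    rw [show (8 : ℝ) = 2 ^ 3 by norm_num, log_pow, Nat.cast_ofNat]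
  have hharmonic : harmonic 8 = 761 / 280 := by
    norm_num [harmonic, Finset.sum_range_succ]
  have h := strictAnti_eulerMascheroniSeq'.antitone hm
  norm_num [eulerMascheroniSeq', hharmonic, log_eight, (by lia : m ≠ 0)] at h
  linarith [log_two_gt_d9]

variable {D : ℝ}

theorem log_two_div_two_le_log (hD : D = exp (1 - eulerMascheroniConstant / 2) / √2) :
    log 2 / 2 ≤ log D := by
  rw [hD, log_div (exp_ne_zero _) (by positivity), log_exp, log_sqrt zero_le_two]
  linarith [eulerMascheroniConstant_lt_two_sub_two_mul_log_two]

theorem four_div_cube_mul_rpow_logb_eq_exp (hD : 0 < D) {x : ℝ} (hx : 0 < x) :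
    4 / D ^ 3 * x ^ logb 2 D = exp (2 * log 2 + log D * (log x / log 2 - 3)) := by
  have log_four : log 4 = 2 * log 2 := by
    rw [show (4 : ℝ) = 2 ^ 2 by norm_num, log_pow, Nat.cast_ofNat]
  have hlog : log (4 / D ^ 3 * x ^ logb 2 D) = 2 * log 2 + log D * (log x / log 2 - 3) := by
    rw [log_mul (by positivity) (by positivity), log_div (by positivity) (by positivity), log_pow,
      log_rpow hx, logb, log_four]
    push_cast
    ring
  rw [← hlog, exp_log (by positivity)]

theorem exp_harmonic_div_two_le (hD : D = exp (1 - eulerMascheroniConstant / 2) / √2) {m : ℕ}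
    (hm : 8 ≤ m) : exp (harmonic m / 2) ≤ 4 / D ^ 3 * (m : ℝ) ^ logb 2 D := by
  have hm₀ : (0 : ℝ) < m := by positivity
  have hlog_m : 3 ≤ log m / log 2 := by
    rw [le_div_iff₀ (log_pos one_lt_two), ← Nat.cast_ofNat, ← log_pow]
    exact log_le_log (by norm_num) (by norm_num; exact_mod_cast hm)
  rw [four_div_cube_mul_rpow_logb_eq_exp (by rw [hD]; positivity) hm₀, exp_le_exp]
  calc
    (harmonic m : ℝ) / 2 ≤ (log m + log 2) / 2 := by
      gcongr
      exact harmonic_le_log_add_log_two hm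
    _ = 2 * log 2 + log 2 / 2 * (log m / log 2 - 3) := by
      field_simp [(log_pos one_lt_two).ne']
      ring
    _ ≤ 2 * log 2 + log D * (log m / log 2 - 3) := by
      gcongr
      exact log_two_div_two_le_log hD

theorem one_le_exp_harmonic_div_two (m : ℕ) : 1 ≤ exp (harmonic m / 2) := by
  have : 0 ≤ harmonic m := Finset.sum_nonneg fun _ _ ↦ by positivity
  exact one_le_exp (by positivity)

theorem KrealOpt_le {n : ℕ} {C : ℝ} (hC : 1 ≤ C)
    (h : ∀ N : ℕ, 0 < N → ∀ U : ContinuousMultilinearMap ℝ (fun _ : Fin n ↦ Fin N → ℝ) ℝ,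
      BHreal n N U ≤ C * ‖U‖) :
    KrealOpt n ≤ C :=
  csInf_le ⟨1, fun _ hC' ↦ hC'.1⟩ ⟨hC, h⟩

end Constants

theorem stmt4_general (n : ℕ) (hn : 8 < n)
    (D : ℝ) (hD : D = exp (1 - eulerMascheroniConstant / 2) / √2) :
    (∀ (N : ℕ) (U : ContinuousMultilinearMap ℝ (fun _ : Fin n ↦ Fin N → ℝ) ℝ),
      BHreal n N U ≤ 4 / D ^ 3 * ((n : ℝ) - 1) ^ logb 2 D * ‖U‖) ∧
    KrealOpt n ≤ 4 / D ^ 3 * ((n : ℝ) - 1) ^ logb 2 D := by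
  have hconst := exp_harmonic_div_two_le hD (Nat.le_sub_one_of_lt hn)
  rw [Nat.cast_pred (by lia)] at hconst
  have hBH (N : ℕ) (U : ContinuousMultilinearMap ℝ (fun _ : Fin n ↦ Fin N → ℝ) ℝ) :
      BHreal n N U ≤ 4 / D ^ 3 * ((n : ℝ) - 1) ^ logb 2 D * ‖U‖ :=
    (BHreal_le_exp_harmonic_mul_norm (by lia) U).trans (by gcongr)
  exact ⟨hBH, KrealOpt_le ((one_le_exp_harmonic_div_two _).trans hconst) fun N _ ↦ hBH N⟩

theorem stmt4 (n : ℕ) (hn : 16 < n)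
    (D : ℝ) (hD : D = Real.exp (1 - Real.eulerMascheroniConstant / 2) / Real.sqrt 2) :
    (∀ N : ℕ, 0 < N →
      ∀ U : ContinuousMultilinearMap ℝ (fun _ : Fin n => (Fin N → ℝ)) ℝ,
        BHreal n N U ≤ 4 / D ^ 3 * ((n : ℝ) - 1) ^ Real.logb 2 D * ‖U‖) ∧
    KrealOpt n ≤ 4 / D ^ 3 * ((n : ℝ) - 1) ^ Real.logb 2 D :=
  (stmt4_general n (by lia) D hD).imp_left fun hBH N _ ↦ hBH N
end

section
/- For every integer n > 2^6 = 64, every positive integer N, and every n-linear form U : (ℝ^N)^n → ℝ, one has (∑_{i₁,…,iₙ=1}^N |U(e_{i₁},…,e_{iₙ})|^{2n/(n+1)})^{(n+1)/(2n)} ≤ 1.310883 · (n-1)^{0.526322} · ‖U‖. -/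
open Real

open scoped NNReal BigOperators
open MeasureTheory ProbabilityTheory

/-! Let `p = 2n / (n + 1)`. Blei's interpolation inequality bounds the Bohnenblust–Hille sum of an
`(n + 1)`-linear form by its mixed `ℓ_p(ℓ_2)` norms, one for each variable. In the chosen variable
Khinchine's inequality replaces the inner `ℓ_2` norm by an average over sign vectors; each sign
vector turns the form into an `n`-linear one of no larger norm, so the `n`-linear inequality
applies and the constant grows by the Khinchine constant of exponent `p`.

For the Khinchine constant, Lyapunov's inequality between the moments of order `p < 2 < 3` reduces
matters to the third moment of a Rademacher sum, and that moment is at most the Gaussian one, since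
`|x + y| ^ 3 + |x - y| ^ 3` is a convex function of `y ^ 2`. This gives the factor
`√(8 / π) ^ (1 / n)`, hence the constant `√(8 / π) ^ H_{n - 1}` for `n`-linear forms. It grows like
a power of `n - 1`, as `H_m - log m` decreases.
-/

theorem sum_prod_rpow_le_prod_sum_rpow {ι κ : Type*} [Fintype ι] [Fintype κ] {w : κ → ℝ}
    (hw : ∀ j, 0 ≤ w j) (hw1 : ∑ j, w j = 1) (f : κ → ι → ℝ≥0) :
    ∑ i, ∏ j, f j i ^ w j ≤ ∏ j, (∑ i, f j i) ^ w j := by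
  let _ : MeasurableSpace ι := ⊤
  have h := ENNReal.lintegral_prod_norm_pow_le (μ := Measure.count)
    Finset.univ (f := fun j i => (f j i : ENNReal))
    (fun j _ => measurable_from_top.aemeasurable) hw1 (fun j _ => hw j)
  simp only [lintegral_count, tsum_fintype,
    ← ENNReal.coe_rpow_of_nonneg _ (hw _)] at h
  simp only [← ENNReal.ofNNReal_finsetSum, ← ENNReal.ofNNReal_finsetProd,
    ← ENNReal.coe_rpow_of_nonneg _ (hw _)] at h
  exact_mod_cast h

theorem Lp_sum_le_sum_Lp {ι κ : Type*} [Fintype ι] [Fintype κ] {r : ℝ} (hr : 1 ≤ r)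
    (f : κ → ι → ℝ≥0) :
    (∑ i, (∑ j, f j i) ^ r) ^ (1 / r) ≤ ∑ j, (∑ i, f j i ^ r) ^ (1 / r) := by
  have hr0 : r ≠ 0 := by positivity
  have h := Finset.le_sum_of_subadditive (fun g : ι → ℝ≥0 => (∑ i, g i ^ r) ^ (1 / r))
    (by simp [hr0]) (fun g h => NNReal.Lp_add_le Finset.univ g h hr) Finset.univ f
  simpa only [Finset.sum_apply] using h

theorem expect_rpow_rpow_le {ι : Type*} [Fintype ι] {f : ι → ℝ} (hf : ∀ i, 0 ≤ f i)
    {p q r : ℝ} (hp : 0 ≤ p) (hpq : p < q) (hqr : q ≤ r) :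
    (𝔼 i, f i ^ q) ^ (r - p) ≤ (𝔼 i, f i ^ p) ^ (r - q) * (𝔼 i, f i ^ r) ^ (q - p) := by
  have hqp : 0 < q - p := sub_pos.2 hpq
  have hrp : 0 < r - p := sub_pos.2 (hpq.trans_le hqr)
  have expect_nonneg (s : ℝ) : 0 ≤ 𝔼 i, f i ^ s :=
    Finset.expect_nonneg fun i _ => rpow_nonneg (hf i) s
  have split_q (i : ι) : f i ^ p * f i ^ (q - p) = f i ^ q := by
    rw [← rpow_add_of_nonneg (hf i) hp hqp.le, add_sub_cancel]
  have split_r (i : ι) : f i ^ p * (f i ^ (q - p)) ^ ((r - p) / (q - p)) = f i ^ r := by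
    rw [← rpow_mul (hf i), mul_div_cancel₀ _ hqp.ne', ← rpow_add_of_nonneg (hf i) hp hrp.le,
      add_sub_cancel]
  have weight : 1 - (q - p) / (r - p) = (r - q) / (r - p) := by field_simp; ring
  have holder : 𝔼 i, f i ^ q ≤
      (𝔼 i, f i ^ p) ^ ((r - q) / (r - p)) * (𝔼 i, f i ^ r) ^ ((q - p) / (r - p)) := by
    have h := compact_inner_le_weight_mul_Lp_of_nonneg Finset.univ (p := (r - p) / (q - p))
      (by rw [one_le_div hqp]; linarith) (w := fun i => f i ^ p) (f := fun i => f i ^ (q - p))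
      (fun i => rpow_nonneg (hf i) _) (fun i => rpow_nonneg (hf i) _)
    simpa only [split_q, split_r, inv_div, weight] using h
  calc (𝔼 i, f i ^ q) ^ (r - p)
      ≤ ((𝔼 i, f i ^ p) ^ ((r - q) / (r - p)) * (𝔼 i, f i ^ r) ^ ((q - p) / (r - p))) ^ (r - p) :=
        rpow_le_rpow (expect_nonneg q) holder hrp.le
    _ = (𝔼 i, f i ^ p) ^ (r - q) * (𝔼 i, f i ^ r) ^ (q - p) := by
        rw [mul_rpow (rpow_nonneg (expect_nonneg p) _) (rpow_nonneg (expect_nonneg r) _),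
          ← rpow_mul (expect_nonneg p), ← rpow_mul (expect_nonneg r),
          div_mul_cancel₀ _ hrp.ne', div_mul_cancel₀ _ hrp.ne']

section Blei

variable {ι : Type*} [Fintype ι] {m : ℕ}

theorem sum_rpow_mul_rpow_mul_prod_rpow_le {α β γ : ℝ} (hα : 0 ≤ α) (hβ : 0 ≤ β)
    (hγ : 0 ≤ γ) (h1 : α + (β + m * γ) = 1) (f g : ι → ℝ≥0) (h : Fin m → ι → ℝ≥0) :
    ∑ s, f s ^ α * (g s ^ β * ∏ k, h k s ^ γ)
      ≤ (∑ s, f s) ^ α * ((∑ s, g s) ^ β * ∏ k, (∑ s, h k s) ^ γ) := by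
  have hw : ∀ j : Fin (m + 2), 0 ≤ (Fin.cons α (Fin.cons β fun _ => γ) : Fin (m + 2) → ℝ) j := by
    simp [Fin.forall_fin_succ, hα, hβ, hγ]
  simpa [Fin.prod_univ_succ] using sum_prod_rpow_le_prod_sum_rpow hw
    (by simpa [Fin.sum_univ_succ] using h1) (Fin.cons f (Fin.cons g h))

/-- The `p`-th power of the mixed `ℓ_p(ℓ_r)` norm of the array `a`: the inner `ℓ_r` norm is taken in
the index at position `k`, the outer `ℓ_p` norm in the remaining indices `j`. These are the
quantities interpolated by Blei's inequality. -/
noncomputable def mixedSum (p r : ℝ) (a : (Fin (m + 1) → ι) → ℝ≥0) (k : Fin (m + 1)) : ℝ≥0 :=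
  ∑ j : Fin m → ι, (∑ t, a (k.insertNth t j) ^ r) ^ (p / r)

theorem sum_fin_succ_pi {M : Type*} [AddCommMonoid M] (f : (Fin (m + 1) → ι) → M) :
    ∑ i, f i = ∑ s, ∑ j : Fin m → ι, f (Fin.cons s j) := by
  rw [← Fintype.sum_prod_type', ← (Fin.consEquiv fun _ => ι).sum_comp]
  rfl

theorem mixedSum_zero (p r : ℝ) (a : (Fin (m + 1) → ι) → ℝ≥0) :
    mixedSum p r a 0 = ∑ j : Fin m → ι, (∑ t, a (Fin.cons t j) ^ r) ^ (p / r) := by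
  simp only [mixedSum, Fin.insertNth_zero']

theorem mixedSum_succ (p r : ℝ) (a : (Fin (m + 2) → ι) → ℝ≥0) (k : Fin (m + 1)) :
    mixedSum p r a k.succ = ∑ s, mixedSum p r (fun j => a (Fin.cons s j)) k := by
  simp only [mixedSum, sum_fin_succ_pi, Fin.insertNth_succ_cons]

variable {p q r θ : ℝ}

/-- The inductive step of Blei's inequality: Hölder in `s`, followed by Minkowski's inequality with
exponent `r / p`, which exchanges the order of summation in one factor. -/
theorem sum_rpow_slices_le {κ : Type*} [Fintype κ] (hp : 0 < p) (hpr : p ≤ r)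
    (hθ : 0 ≤ θ) (hq : 0 < q) (hpq : 1 / q = (1 - θ) / p + θ / r) (hm : (m + 1) * θ ≤ 1)
    (a : ι → κ → ℝ≥0) (R : Fin m → ι → ℝ≥0) :
    ∑ s, (∑ j, a s j ^ p) ^ ((1 - m * θ) * q / p) * ∏ k, R k s ^ (θ * q / p) ≤
      (∑ s, ∑ j, a s j ^ p) ^ ((1 - (m + 1) * θ) * q / p) *
        ((∑ j, (∑ s, a s j ^ r) ^ (p / r)) ^ (θ * q / p) *
          ∏ k, (∑ s, R k s) ^ (θ * q / p)) := by
  have hr : 0 < r := hp.trans_le hpr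
  have : 0 ≤ 1 - (m + 1) * θ := sub_nonneg.2 hm
  set P : ι → ℝ≥0 := fun s => ∑ j, a s j ^ p
  have split (s : ι) : P s ^ ((1 - m * θ) * q / p) =
      P s ^ ((1 - (m + 1) * θ) * q / p) * (P s ^ (r / p)) ^ (θ * q / r) := by
    rw [← NNReal.rpow_mul, ← NNReal.rpow_add_of_nonneg _ (by positivity) (by positivity)]
    congr 1
    field_simp
    ring
  have minkowski : (∑ s, P s ^ (r / p)) ^ (p / r) ≤ ∑ j, (∑ s, a s j ^ r) ^ (p / r) := by
    have h := Lp_sum_le_sum_Lp ((one_le_div hp).2 hpr) fun j s => a s j ^ p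
    simpa only [one_div_div, ← NNReal.rpow_mul, mul_div_cancel₀ r hp.ne'] using h
  calc ∑ s, P s ^ ((1 - m * θ) * q / p) * ∏ k, R k s ^ (θ * q / p)
      = ∑ s, P s ^ ((1 - (m + 1) * θ) * q / p) *
          ((P s ^ (r / p)) ^ (θ * q / r) * ∏ k, R k s ^ (θ * q / p)) := by
        simp only [split, mul_assoc]
    _ ≤ (∑ s, P s) ^ ((1 - (m + 1) * θ) * q / p) *
          ((∑ s, P s ^ (r / p)) ^ (θ * q / r) * ∏ k, (∑ s, R k s) ^ (θ * q / p)) :=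
        sum_rpow_mul_rpow_mul_prod_rpow_le (by positivity) (by positivity) (by positivity)
          (by field_simp at hpq ⊢; linarith) _ _ _
    _ = (∑ s, P s) ^ ((1 - (m + 1) * θ) * q / p) * (((∑ s, P s ^ (r / p)) ^ (p / r)) ^
          (θ * q / p) * ∏ k, (∑ s, R k s) ^ (θ * q / p)) := by
        rw [← NNReal.rpow_mul _ (p / r), div_mul_div_comm, mul_comm r p,
          mul_div_mul_left _ _ hp.ne']
    _ ≤ _ := by gcongr

/-- Blei's inequality is the case `(m + 1) * θ = 1`. Leaving `θ` free, at the cost of a power of the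
full `ℓ_p` sum, is what allows induction on `m`: slices have one index less but the same `θ`. -/
theorem sum_rpow_le_mul_prod_mixedSum (hp : 0 < p) (hpr : p ≤ r) (hθ : 0 ≤ θ) (hq : 0 < q)
    (hpq : 1 / q = (1 - θ) / p + θ / r) (hm : (m + 1) * θ ≤ 1)
    (a : (Fin (m + 1) → ι) → ℝ≥0) :
    ∑ i, a i ^ q ≤ (∑ i, a i ^ p) ^ ((1 - (m + 1) * θ) * q / p) *
      ∏ k, mixedSum p r a k ^ (θ * q / p) := by
  induction m with
  | zero =>
    have h := sum_rpow_slices_le (m := 0) hp hpr hθ hq hpq hm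
      (fun s (j : Fin 0 → ι) => a (Fin.cons s j)) Fin.elim0
    simpa [sum_fin_succ_pi, mixedSum_zero, ← NNReal.rpow_mul, mul_div_cancel₀ _ hp.ne'] using h
  | succ m ih =>
    push_cast at hm ⊢
    have ih' (s : ι) := ih (by linarith) fun j => a (Fin.cons s j)
    rw [sum_fin_succ_pi, sum_fin_succ_pi, Fin.prod_univ_succ, mixedSum_zero]
    simp only [mixedSum_succ]
    have h := sum_rpow_slices_le (m := m + 1) hp hpr hθ hq hpq (by exact_mod_cast hm)
      (fun s j => a (Fin.cons s j)) fun k s => mixedSum p r (fun j => a (Fin.cons s j)) k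
    push_cast at h
    exact (Finset.sum_le_sum fun s _ => ih' s).trans h

theorem sum_rpow_le_of_mixedSum_le (hp : 0 < p) (hpr : p ≤ r) (hq : 0 < q)
    (hpq : 1 / q = (1 - 1 / (m + 1)) / p + 1 / (m + 1) / r) {B : ℝ≥0}
    {a : (Fin (m + 1) → ι) → ℝ≥0} (h : ∀ k, mixedSum p r a k ≤ B ^ p) :
    ∑ i, a i ^ q ≤ B ^ q := by
  have hm : ((m : ℝ) + 1) * (1 / (m + 1)) = 1 := by field_simp
  calc ∑ i, a i ^ q ≤ ∏ k, mixedSum p r a k ^ (1 / (m + 1) * q / p) := by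
        simpa only [hm, sub_self, zero_mul, zero_div, NNReal.rpow_zero, one_mul] using
          sum_rpow_le_mul_prod_mixedSum hp hpr (by positivity) hq hpq hm.le a
    _ ≤ ∏ _k : Fin (m + 1), (B ^ p) ^ (1 / (m + 1) * q / p) := by gcongr with k; exact h k
    _ = B ^ q := by
        rw [Finset.prod_const, Finset.card_fin, ← NNReal.rpow_mul, ← NNReal.rpow_mul_natCast]
        congr 1
        push_cast
        field_simp

end Blei

section Rademacher

variable {ι : Type*} [Fintype ι] [DecidableEq ι]

theorem expect_sum_insert_mul_sign {s : Finset ι} {t : ι} (ht : t ∉ s) (a : ι → ℝ)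
    (F : ℝ → ℝ) :
    𝔼 ε : ι → ℤˣ, F (∑ i ∈ insert t s, (ε i : ℤ) * a i) =
      𝔼 ε : ι → ℤˣ,
        (F (∑ i ∈ s, (ε i : ℤ) * a i + a t) + F (∑ i ∈ s, (ε i : ℤ) * a i - a t)) / 2 := by
  set S : (ι → ℤˣ) → ℝ := fun ε => ∑ i ∈ s, (ε i : ℤ) * a i
  have flip : 𝔼 ε : ι → ℤˣ, F (S ε + (ε t : ℤ) * a t) =
      𝔼 ε : ι → ℤˣ, F (S ε - (ε t : ℤ) * a t) := by
    refine Fintype.expect_equiv (Equiv.mulLeft (Pi.mulSingle t (-1))) _ _ fun ε => ?_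
    have hS : S (Pi.mulSingle t (-1) * ε) = S ε := Finset.sum_congr rfl fun i hi => by
      rw [Pi.mul_apply, Pi.mulSingle_eq_of_ne (ne_of_mem_of_not_mem hi ht), one_mul]
    simp [hS]
  have symm (ε : ι → ℤˣ) : F (S ε + (ε t : ℤ) * a t) + F (S ε - (ε t : ℤ) * a t) =
      F (S ε + a t) + F (S ε - a t) := by
    rcases Int.units_eq_one_or (ε t) with h | h <;> simp [h, add_comm, sub_eq_add_neg]
  calc 𝔼 ε : ι → ℤˣ, F (∑ i ∈ insert t s, (ε i : ℤ) * a i)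
      = 𝔼 ε : ι → ℤˣ, F (S ε + (ε t : ℤ) * a t) := by
        simp only [Finset.sum_insert ht, add_comm, S]
    _ = (𝔼 ε : ι → ℤˣ, F (S ε + (ε t : ℤ) * a t) +
          𝔼 ε : ι → ℤˣ, F (S ε - (ε t : ℤ) * a t)) / 2 := by rw [← flip, add_self_div_two]
    _ = _ := by
      rw [← Finset.expect_add_distrib, Finset.expect_div]
      simp only [symm, S]

theorem expect_sq_sum_mul_sign (s : Finset ι) (a : ι → ℝ) :
    𝔼 ε : ι → ℤˣ, (∑ i ∈ s, (ε i : ℤ) * a i) ^ 2 = ∑ i ∈ s, a i ^ 2 := by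
  induction s using Finset.induction_on with
  | empty => simp
  | insert t s ht ih =>
    have parallelogram (x : ℝ) : ((x + a t) ^ 2 + (x - a t) ^ 2) / 2 = a t ^ 2 + x ^ 2 := by ring
    rw [expect_sum_insert_mul_sign ht a (· ^ 2)]
    simp only [parallelogram]
    rw [Finset.expect_add_distrib, Fintype.expect_const, ih, Finset.sum_insert ht]

end Rademacher

section CubeTangent

theorem abs_add_cube_add_abs_sub_cube_of_abs_le {x y : ℝ} (h : |y| ≤ |x|) :
    |x + y| ^ 3 + |x - y| ^ 3 = 2 * |x| ^ 3 + 6 * |x| * |y| ^ 2 := by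
  rcases abs_cases x with ⟨hx, _⟩ | ⟨hx, _⟩ <;> rcases abs_cases y with ⟨hy, _⟩ | ⟨hy, _⟩ <;>
  rw [hx, hy] at h ⊢
  · rw [abs_of_nonneg (by linarith), abs_of_nonneg (by linarith)]; ring
  · rw [abs_of_nonneg (by linarith), abs_of_nonneg (by linarith)]; ring
  · rw [abs_of_nonpos (by linarith), abs_of_nonpos (by linarith)]; ring
  · rw [abs_of_nonpos (by linarith), abs_of_nonpos (by linarith)]; ring

theorem abs_add_cube_add_abs_sub_cube_of_le_abs {x y : ℝ} (h : |x| ≤ |y|) :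
    |x + y| ^ 3 + |x - y| ^ 3 = 2 * |y| ^ 3 + 6 * |y| * |x| ^ 2 := by
  rw [← abs_add_cube_add_abs_sub_cube_of_abs_le h, add_comm x y, abs_sub_comm x y]

theorem tangent_le_cube_left {X A Y : ℝ} (hX : 0 ≤ X) (hA : X ≤ A) (hA0 : 0 < A) (hY0 : 0 ≤ Y)
    (hY : Y ≤ X) :
    2 * A ^ 3 + 6 * A * X ^ 2 + (3 * A + 3 * X ^ 2 / A) * (Y ^ 2 - A ^ 2) ≤
      2 * X ^ 3 + 6 * X * Y ^ 2 := by
  have factored : 2 * X ^ 3 + 6 * X * Y ^ 2 -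
      (2 * A ^ 3 + 6 * A * X ^ 2 + (3 * A + 3 * X ^ 2 / A) * (Y ^ 2 - A ^ 2)) =
      (A - X) ^ 2 * (3 * (X ^ 2 - Y ^ 2) + ((A - X) * (A + 3 * X))) / A := by
    field_simp
    ring
  rw [← sub_nonneg, factored]
  have : 0 ≤ A - X := by linarith
  have : 0 ≤ X ^ 2 - Y ^ 2 := by nlinarith
  positivity

theorem tangent_le_cube_right {X A Y : ℝ} (hX : 0 ≤ X) (hA : X ≤ A) (hA0 : 0 < A)
    (hY : X ≤ Y) :
    2 * A ^ 3 + 6 * A * X ^ 2 + (3 * A + 3 * X ^ 2 / A) * (Y ^ 2 - A ^ 2) ≤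
      2 * Y ^ 3 + 6 * Y * X ^ 2 := by
  have factored : 2 * Y ^ 3 + 6 * Y * X ^ 2 -
      (2 * A ^ 3 + 6 * A * X ^ 2 + (3 * A + 3 * X ^ 2 / A) * (Y ^ 2 - A ^ 2)) =
      (Y - A) ^ 2 * (2 * A * (Y - X) + (A - X) * (A + 3 * X)) / A := by
    field_simp
    ring
  rw [← sub_nonneg, factored]
  have : 0 ≤ A - X := by linarith
  have : 0 ≤ Y - X := by linarith
  have : 0 ≤ Y := by linarith
  positivity

/-- The tangent at `a ^ 2` to a convex function of `y ^ 2`. The slope is the derivative in `y ^ 2`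
of `2 * |y| ^ 3 + 6 * |y| * |x| ^ 2`, the value of the function for `|x| ≤ |y|`. -/
theorem tangent_le_abs_add_cube_add_abs_sub_cube {x a : ℝ} (ha0 : a ≠ 0) (ha : |x| ≤ |a|)
    (y : ℝ) :
    |x + a| ^ 3 + |x - a| ^ 3 + (3 * |a| + 3 * |x| ^ 2 / |a|) * (y ^ 2 - a ^ 2) ≤
      |x + y| ^ 3 + |x - y| ^ 3 := by
  have hx := abs_nonneg x
  have ha0' := abs_pos.2 ha0
  rw [abs_add_cube_add_abs_sub_cube_of_le_abs ha, ← sq_abs y, ← sq_abs a]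
  rcases le_total |y| |x| with hy | hy
  · rw [abs_add_cube_add_abs_sub_cube_of_abs_le hy]
    exact tangent_le_cube_left hx ha ha0' (abs_nonneg y) hy
  · rw [abs_add_cube_add_abs_sub_cube_of_le_abs hy]
    exact tangent_le_cube_right hx ha ha0' hy

theorem exists_tangent_abs_add_cube_add_abs_sub_cube (x a : ℝ) :
    ∃ c : ℝ, ∀ y, |x + a| ^ 3 + |x - a| ^ 3 + c * (y ^ 2 - a ^ 2) ≤
      |x + y| ^ 3 + |x - y| ^ 3 := by
  rcases lt_or_ge |x| |a| with ha | ha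
  · exact ⟨_, tangent_le_abs_add_cube_add_abs_sub_cube
      (abs_pos.1 ((abs_nonneg x).trans_lt ha)) ha.le⟩
  rcases eq_or_ne x 0 with rfl | hx
  · obtain rfl : a = 0 := by simpa using ha
    exact ⟨0, fun y => by simp⟩
  · refine ⟨3 * |x| + 3 * |x| ^ 2 / |x|, fun y => ?_⟩
    have h := tangent_le_abs_add_cube_add_abs_sub_cube hx le_rfl y
    rw [abs_add_cube_add_abs_sub_cube_of_abs_le le_rfl] at h
    rw [abs_add_cube_add_abs_sub_cube_of_abs_le ha]
    refine le_of_eq_of_le ?_ h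
    have := abs_pos.2 hx
    rw [← sq_abs a, ← sq_abs x]
    field_simp
    ring

end CubeTangent

theorem integral_abs_rpow_gaussianReal {v : ℝ≥0} {q : ℝ} (hq : -1 < q) (hv : v ≠ 0) :
    ∫ y, |y| ^ q ∂gaussianReal 0 v = (2 * v) ^ (q / 2) * Gamma ((q + 1) / 2) / √π := by
  have : (0 : ℝ) < v := by positivity
  have h (y : ℝ) : gaussianPDFReal 0 v y • |y| ^ q =
      (√(2 * π * v))⁻¹ * (|y| ^ q * rexp (-(2 * (v : ℝ))⁻¹ * |y| ^ (2 : ℝ))) := by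
    simp only [gaussianPDFReal, rpow_two, sq_abs, sub_zero, smul_eq_mul]
    ring_nf
  rw [integral_gaussianReal_eq_integral_smul hv]
  simp only [h]
  rw [integral_const_mul,
    integral_comp_abs (f := fun z : ℝ => z ^ q * rexp (-(2 * (v : ℝ))⁻¹ * z ^ (2 : ℝ))),
    integral_rpow_mul_exp_neg_mul_rpow two_pos hq (by positivity)]
  have h1 : (2 * (v : ℝ))⁻¹ ^ (-(q + 1) / 2) = (2 * v) ^ (q / 2) * √(2 * v) := by
    rw [inv_rpow (by positivity), ← rpow_neg (by positivity), sqrt_eq_rpow,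
      ← rpow_add (by positivity)]
    ring_nf
  have h2 : √(2 * π * v) = √(2 * v) * √π := by
    rw [← sqrt_mul (by positivity)]; ring_nf
  rw [h1, h2]
  field_simp

theorem integral_abs_cube_gaussianReal (v : ℝ≥0) :
    ∫ y, |y| ^ 3 ∂gaussianReal 0 v = √(8 / π) * (v : ℝ) ^ (3 / 2 : ℝ) := by
  rcases eq_or_ne v 0 with rfl | hv
  · simp [zero_rpow]
  have h := integral_abs_rpow_gaussianReal (q := 3) (by norm_num) hv
  simp only [rpow_ofNat] at h
  have hΓ : Gamma ((3 + 1) / 2) = 1 := by norm_num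
  have h8 : (2 : ℝ) ^ (3 / 2 : ℝ) = √8 := by
    rw [sqrt_eq_rpow, show (8 : ℝ) = 2 ^ (3 : ℝ) by norm_num, ← rpow_mul two_pos.le]
    norm_num
  rw [h, hΓ, mul_rpow two_pos.le v.coe_nonneg, h8, sqrt_div (by norm_num)]
  ring

/-- The Gaussian smoothing `𝔼 |x + G| ^ 3` of the absolute cube, with `G` centred of variance `v`.
It interpolates between the third moments of Rademacher and of Gaussian sums when the signs are
replaced by Gaussians one at a time. -/
noncomputable def gaussianAbsCube (v : ℝ≥0) (x : ℝ) : ℝ :=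
  ∫ y, |x + y| ^ 3 ∂gaussianReal 0 v

theorem integrable_abs_add_cube (v : ℝ≥0) (x : ℝ) :
    Integrable (fun y => |x + y| ^ 3) (gaussianReal 0 v) := by
  have h : MemLp (fun y : ℝ => x + y) 3 (gaussianReal 0 v) :=
    (memLp_const x).add (memLp_id_gaussianReal' 3 (by simp))
  simpa using h.integrable_norm_pow (p := 3) (by simp)

theorem gaussianAbsCube_var_zero (x : ℝ) : gaussianAbsCube 0 x = |x| ^ 3 := by
  simp [gaussianAbsCube]

theorem gaussianAbsCube_zero (v : ℝ≥0) :
    gaussianAbsCube v 0 = √(8 / π) * (v : ℝ) ^ (3 / 2 : ℝ) := by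
  simp [gaussianAbsCube, integral_abs_cube_gaussianReal]

theorem gaussianReal_add_var (v w : ℝ≥0) :
    gaussianReal 0 (v + w) = (gaussianReal 0 v).conv (gaussianReal 0 w) := by
  rw [gaussianReal_conv_gaussianReal, add_zero]

theorem integrable_gaussianAbsCube_add (v w : ℝ≥0) (x : ℝ) :
    Integrable (fun y => gaussianAbsCube w (x + y)) (gaussianReal 0 v) := by
  have h := integrable_abs_add_cube (v + w) x
  rw [gaussianReal_add_var, integrable_conv_iff (by fun_prop)] at h
  simpa [gaussianAbsCube, add_assoc] using h.2

theorem integral_gaussianAbsCube_add (v w : ℝ≥0) (x : ℝ) :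
    ∫ y, gaussianAbsCube w (x + y) ∂gaussianReal 0 v = gaussianAbsCube (v + w) x := by
  have h := integrable_abs_add_cube (v + w) x
  rw [gaussianReal_add_var] at h
  rw [gaussianAbsCube, gaussianReal_add_var, integral_conv h]
  simp only [gaussianAbsCube, add_assoc]

theorem integral_abs_sub_cube (v : ℝ≥0) (x : ℝ) :
    ∫ y, |x - y| ^ 3 ∂gaussianReal 0 v = gaussianAbsCube v x := by
  have h : (gaussianReal 0 v).map (fun y => -y) = gaussianReal 0 v := by
    rw [gaussianReal_map_neg, neg_zero]
  rw [gaussianAbsCube, ← h, integral_map (by fun_prop) (by fun_prop), h]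
  simp [sub_eq_add_neg]

theorem integral_sq_gaussianReal (v : ℝ≥0) : ∫ y, y ^ 2 ∂gaussianReal 0 v = v := by
  have h := variance_fun_id_gaussianReal (μ := 0) (v := v)
  rw [variance_eq_integral (by fun_prop)] at h
  simpa using h

/-- Integrating the tangent at `a ^ 2` against a Gaussian of variance `a ^ 2` removes its slope. -/
theorem abs_add_cube_add_abs_sub_cube_le (x a : ℝ) :
    |x + a| ^ 3 + |x - a| ^ 3 ≤ 2 * gaussianAbsCube (‖a‖₊ ^ 2) x := by
  obtain ⟨c, hc⟩ := exists_tangent_abs_add_cube_add_abs_sub_cube x a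
  set γ := gaussianReal 0 (‖a‖₊ ^ 2)
  have int_sq : Integrable (fun y => y ^ 2) γ := (memLp_id_gaussianReal' 2 (by simp)).integrable_sq
  have int_line : Integrable (fun y => c * (y ^ 2 - a ^ 2)) γ :=
    (int_sq.sub (integrable_const _)).const_mul c
  have int_sub : Integrable (fun y => |x - y| ^ 3) γ := by
    have h : MemLp (fun y : ℝ => x - y) 3 γ :=
      (memLp_const x).sub (memLp_id_gaussianReal' 3 (by simp))
    simpa using h.integrable_norm_pow (p := 3) (by simp)
  have line_eq : ∫ y, c * (y ^ 2 - a ^ 2) ∂γ = 0 := by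
    rw [integral_const_mul, integral_sub int_sq (integrable_const _), integral_sq_gaussianReal]
    simp
  calc |x + a| ^ 3 + |x - a| ^ 3
      = ∫ y, (|x + a| ^ 3 + |x - a| ^ 3 + c * (y ^ 2 - a ^ 2)) ∂γ := by
        rw [integral_add (integrable_const _) int_line, line_eq]
        simp
    _ ≤ ∫ y, (|x + y| ^ 3 + |x - y| ^ 3) ∂γ :=
        integral_mono ((integrable_const _).add int_line)
          ((integrable_abs_add_cube _ x).add int_sub) hc
    _ = 2 * gaussianAbsCube (‖a‖₊ ^ 2) x := by
        rw [integral_add (integrable_abs_add_cube _ x) int_sub, integral_abs_sub_cube, two_mul,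
          gaussianAbsCube]

theorem gaussianAbsCube_add_add_sub_le (v : ℝ≥0) (x a : ℝ) :
    gaussianAbsCube v (x + a) + gaussianAbsCube v (x - a) ≤
      2 * gaussianAbsCube (v + ‖a‖₊ ^ 2) x := by
  calc gaussianAbsCube v (x + a) + gaussianAbsCube v (x - a)
      = ∫ y, (|x + a + y| ^ 3 + |x - a + y| ^ 3) ∂gaussianReal 0 v :=
        (integral_add (integrable_abs_add_cube v _) (integrable_abs_add_cube v _)).symm
    _ ≤ ∫ y, 2 * gaussianAbsCube (‖a‖₊ ^ 2) (x + y) ∂gaussianReal 0 v := by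
        refine integral_mono ((integrable_abs_add_cube v _).add (integrable_abs_add_cube v _))
          ((integrable_gaussianAbsCube_add v _ x).const_mul 2) fun y => ?_
        simpa only [add_right_comm, add_sub_right_comm] using
          abs_add_cube_add_abs_sub_cube_le (x + y) a
    _ = 2 * gaussianAbsCube (v + ‖a‖₊ ^ 2) x := by
        rw [integral_const_mul, integral_gaussianAbsCube_add]

section Khinchine

variable {ι : Type*} [Fintype ι] [DecidableEq ι]

theorem expect_gaussianAbsCube_sum_mul_sign_le (s : Finset ι) (a : ι → ℝ) (v : ℝ≥0) :
    𝔼 ε : ι → ℤˣ, gaussianAbsCube v (∑ i ∈ s, (ε i : ℤ) * a i) ≤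
      gaussianAbsCube (v + ∑ i ∈ s, ‖a i‖₊ ^ 2) 0 := by
  induction s using Finset.induction_on generalizing v with
  | empty => simp
  | insert t s ht ih =>
    rw [expect_sum_insert_mul_sign ht, Finset.sum_insert ht, ← add_assoc]
    refine (Finset.expect_le_expect fun ε _ => ?_).trans (ih (v + ‖a t‖₊ ^ 2))
    rw [div_le_iff₀' two_pos]
    exact gaussianAbsCube_add_add_sub_le v _ _

theorem expect_abs_cube_sum_mul_sign_le (a : ι → ℝ) :
    𝔼 ε : ι → ℤˣ, |∑ i, (ε i : ℤ) * a i| ^ 3 ≤ √(8 / π) * (∑ i, a i ^ 2) ^ (3 / 2 : ℝ) := by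
  have h := expect_gaussianAbsCube_sum_mul_sign_le Finset.univ a 0
  simpa [gaussianAbsCube_var_zero, gaussianAbsCube_zero] using h

theorem sum_sq_rpow_le_mul_expect_abs_rpow {p : ℝ} (hp : 0 < p) (hp2 : p < 2) (a : ι → ℝ) :
    (∑ i, a i ^ 2) ^ (p / 2) ≤
      √(8 / π) ^ (2 - p) * 𝔼 ε : ι → ℤˣ, |∑ i, (ε i : ℤ) * a i| ^ p := by
  set σ := ∑ i, a i ^ 2
  set X := 𝔼 ε : ι → ℤˣ, |∑ i, (ε i : ℤ) * a i| ^ p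
  have : 0 ≤ X := Finset.expect_nonneg fun ε _ => by positivity
  have hσ : 0 ≤ σ := by positivity
  rcases hσ.eq_or_lt with h0 | hσ
  · rw [← h0, zero_rpow (by positivity)]
    positivity
  have interpolation : σ ^ (3 - p) ≤
      X * (𝔼 ε : ι → ℤˣ, |∑ i, (ε i : ℤ) * a i| ^ 3) ^ (2 - p) := by
    have h := expect_rpow_rpow_le
      (fun ε : ι → ℤˣ => abs_nonneg (∑ i, (ε i : ℤ) * a i)) hp.le hp2 (show (2 : ℝ) ≤ 3 by norm_num)
    have h32 : (3 : ℝ) - 2 = 1 := by norm_num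
    simpa only [rpow_ofNat, sq_abs, expect_sq_sum_mul_sign, h32, rpow_one] using h
  have : 0 ≤ 2 - p := by linarith
  have third_moment : σ ^ (3 - p) ≤ X * (√(8 / π) * σ ^ (3 / 2 : ℝ)) ^ (2 - p) := by
    refine interpolation.trans ?_
    gcongr
    exact expect_abs_cube_sum_mul_sign_le a
  have split : σ ^ (3 - p) = σ ^ (p / 2) * (σ ^ (3 / 2 : ℝ)) ^ (2 - p) := by
    rw [← rpow_mul hσ.le, ← rpow_add hσ]
    ring_nf
  rw [split, mul_rpow (by positivity) (by positivity), ← mul_assoc, mul_comm X] at third_moment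
  exact le_of_mul_le_mul_right third_moment (by positivity)

end Khinchine

section BohnenblustHille

theorem single_insertNth {ι : Type*} [DecidableEq ι] {n : ℕ} (k : Fin (n + 1)) (t : ι)
    (j : Fin n → ι) :
    (fun l => Pi.single ((k.insertNth t j : Fin (n + 1) → ι) l) (1 : ℝ)) =
      (k.insertNth (Pi.single t 1) fun l => Pi.single (j l) 1 : Fin (n + 1) → ι → ℝ) := by
  refine (Fin.insertNth_eq_iff.2 ⟨by simp, ?_⟩).symm
  ext l
  simp [Fin.removeNth]

variable {ι : Type*} [Fintype ι] [DecidableEq ι]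

theorem apply_insertNth_eq_sum {n : ℕ}
    (U : ContinuousMultilinearMap ℝ (fun _ : Fin (n + 1) => ι → ℝ) ℝ) (k : Fin (n + 1))
    (x : ι → ℝ) (v : Fin n → ι → ℝ) :
    U (k.insertNth x v) = ∑ t, x t * U (k.insertNth (Pi.single t 1) v) := by
  simp only [← ContinuousMultilinearMap.curryMid_apply]
  conv_lhs => rw [pi_eq_sum_univ' x, map_sum]
  simp only [map_smul, sum_apply, smul_apply, smul_eq_mul]

theorem BHreal_le_iff {n N : ℕ} (hn : 0 < n)
    {U : ContinuousMultilinearMap ℝ (fun _ : Fin n => (Fin N → ℝ)) ℝ} {B : ℝ} (hB : 0 ≤ B) :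
    BHreal n N U ≤ B ↔
      ∑ i : Fin n → Fin N, |U (fun k => Pi.single (i k) (1 : ℝ))| ^ ((2 * n : ℝ) / (n + 1)) ≤
        B ^ ((2 * n : ℝ) / (n + 1)) := by
  rw [BHreal, ← inv_div (2 * n : ℝ)]
  exact rpow_inv_le_iff_of_pos (by positivity) hB (by positivity)

theorem BHreal_one_le {N : ℕ} (U : ContinuousMultilinearMap ℝ (fun _ : Fin 1 => (Fin N → ℝ)) ℝ) :
    BHreal 1 N U ≤ ‖U‖ := by
  set x : Fin N → ℝ := fun t => SignType.sign (U fun _ => Pi.single t 1)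
  have hx : ‖x‖ ≤ 1 := (pi_norm_le_iff_of_nonneg zero_le_one).2 fun t => by
    rcases lt_trichotomy (U fun _ => Pi.single t 1) 0 with h | h | h <;> simp [x, h]
  have insertNth_eq (y : Fin N → ℝ) :
      (Fin.insertNth 0 y Fin.elim0 : Fin 1 → Fin N → ℝ) = fun _ => y := by
    funext k
    rw [Fin.eq_zero k, Fin.insertNth_apply_same]
  have expand : U (fun _ => x) = ∑ t, x t * U fun _ => Pi.single t 1 := by
    simpa only [insertNth_eq] using apply_insertNth_eq_sum U 0 x Fin.elim0
  have exponent : 2 * ((1 : ℕ) : ℝ) / ((1 : ℕ) + 1) = 1 := by norm_num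
  rw [BHreal_le_iff one_pos (norm_nonneg U), exponent]
  simp only [rpow_one]
  calc ∑ i : Fin 1 → Fin N, |U fun k => Pi.single (i k) 1|
      = ∑ t, |U fun _ => Pi.single t 1| :=
        Fintype.sum_equiv (Equiv.funUnique (Fin 1) (Fin N)) _ _ fun i => by
          congr 2
          funext k
          rw [Fin.eq_zero k]
          rfl
    _ = U fun _ => x := by simp only [expand, x, sign_mul_self]
    _ ≤ ‖U‖ := (le_abs_self _).trans <| by
        simpa using U.le_opNorm_mul_pow_of_le (m := fun _ => x) (b := 1) (by simpa using hx)

theorem mixedSum_nnnorm_apply_single_le {n : ℕ} {p : ℝ} (hp : 0 < p) (hp2 : p < 2) {B : ℝ}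
    (hB : 0 ≤ B)
    (h : ∀ V : ContinuousMultilinearMap ℝ (fun _ : Fin n => ι → ℝ) ℝ,
      ∑ j : Fin n → ι, |V fun l => Pi.single (j l) (1 : ℝ)| ^ p ≤ (B * ‖V‖) ^ p)
    (U : ContinuousMultilinearMap ℝ (fun _ : Fin (n + 1) => ι → ℝ) ℝ) (k : Fin (n + 1)) :
    (mixedSum p 2 (fun i : Fin (n + 1) → ι => ‖U fun l => Pi.single (i l) 1‖₊) k : ℝ) ≤
      √(8 / π) ^ (2 - p) * (B * ‖U‖) ^ p := by
  set x : (ι → ℤˣ) → ι → ℝ := fun ε t => (ε t : ℤ)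
  have hx (ε) : ‖x ε‖ ≤ 1 := (pi_norm_le_iff_of_nonneg zero_le_one).2 fun t => by
    rw [Real.norm_eq_abs, abs_unit_intCast]
  have hV (ε) : ‖U.curryMid k (x ε)‖ ≤ ‖U‖ := by
    simpa only [U.norm_curryMid] using (U.curryMid k).unit_le_opNorm (x ε) (hx ε)
  calc (mixedSum p 2 (fun i : Fin (n + 1) → ι => ‖U fun l => Pi.single (i l) 1‖₊) k : ℝ)
      = ∑ j : Fin n → ι,
          (∑ t, U (k.insertNth (Pi.single t 1) fun l => Pi.single (j l) 1) ^ 2) ^ (p / 2) := by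
        simp [mixedSum, single_insertNth]
    _ ≤ ∑ j : Fin n → ι, √(8 / π) ^ (2 - p) * 𝔼 ε,
          |U.curryMid k (x ε) fun l => Pi.single (j l) 1| ^ p := by
        gcongr with j
        have expand (ε) := apply_insertNth_eq_sum U k (x ε) fun l => Pi.single (j l) 1
        simp only [U.curryMid_apply, expand]
        exact sum_sq_rpow_le_mul_expect_abs_rpow hp hp2 _
    _ = √(8 / π) ^ (2 - p) * 𝔼 ε, ∑ j : Fin n → ι,
          |U.curryMid k (x ε) fun l => Pi.single (j l) 1| ^ p := by
        rw [← Finset.mul_sum, Finset.expect_sum_comm]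
    _ ≤ √(8 / π) ^ (2 - p) * 𝔼 _ε : ι → ℤˣ, (B * ‖U‖) ^ p := by
        gcongr with ε
        refine (h _).trans ?_
        gcongr
        exact hV ε
    _ = √(8 / π) ^ (2 - p) * (B * ‖U‖) ^ p := by rw [Fintype.expect_const]

theorem BHreal_succ_le {n N : ℕ} (hn : 0 < n) {C : ℝ} (hC : 0 ≤ C)
    (h : ∀ V : ContinuousMultilinearMap ℝ (fun _ : Fin n => (Fin N → ℝ)) ℝ,
      BHreal n N V ≤ C * ‖V‖)
    (U : ContinuousMultilinearMap ℝ (fun _ : Fin (n + 1) => (Fin N → ℝ)) ℝ) :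
    BHreal (n + 1) N U ≤ √(8 / π) ^ (1 / n : ℝ) * C * ‖U‖ := by
  set p : ℝ := 2 * n / (n + 1) with hp
  have hp0 : 0 < p := by positivity
  have two_sub_p : 2 - p = 2 / (n + 1) := by rw [hp]; field_simp; ring
  have hp2 : p < 2 := by rw [← sub_pos, two_sub_p]; positivity
  have hq : 1 / (2 * ((n + 1 : ℕ) : ℝ) / ((n + 1 : ℕ) + 1)) =
      (1 - 1 / (n + 1)) / p + 1 / (n + 1) / 2 := by
    rw [hp]; push_cast; field_simp; ring
  have hM : (√(8 / π) ^ (1 / n : ℝ)) ^ p = √(8 / π) ^ (2 - p) := by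
    rw [← rpow_mul (sqrt_nonneg _), two_sub_p, hp]
    congr 1
    field_simp
  have hB : 0 ≤ √(8 / π) ^ (1 / n : ℝ) * C * ‖U‖ := by positivity
  have hBp : (√(8 / π) ^ (1 / n : ℝ) * C * ‖U‖) ^ p = √(8 / π) ^ (2 - p) * (C * ‖U‖) ^ p := by
    rw [mul_assoc, mul_rpow (by positivity) (by positivity), hM]
  have hmixed (k : Fin (n + 1)) := (mixedSum_nnnorm_apply_single_le hp0 hp2
    hC
    (fun V => (BHreal_le_iff hn (by positivity)).1 (h V)) U k).trans_eq hBp.symm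
  rw [BHreal_le_iff n.succ_pos hB]
  lift √(8 / π) ^ (1 / n : ℝ) * C * ‖U‖ to ℝ≥0 using hB with B
  have blei := sum_rpow_le_of_mixedSum_le hp0 hp2.le (by positivity) hq
    fun k => by exact_mod_cast hmixed k
  rw [← NNReal.coe_le_coe] at blei
  simpa using blei

theorem BHreal_succ_le_rpow_harmonic (n : ℕ) {N : ℕ}
    (U : ContinuousMultilinearMap ℝ (fun _ : Fin (n + 1) => (Fin N → ℝ)) ℝ) :
    BHreal (n + 1) N U ≤ √(8 / π) ^ (harmonic n : ℝ) * ‖U‖ := by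
  induction n with
  | zero => simpa using BHreal_one_le U
  | succ n ih =>
    have h := BHreal_succ_le n.succ_pos (by positivity) ih U
    rw [← rpow_add (by positivity)] at h
    rw [harmonic_succ]
    push_cast at h ⊢
    rwa [add_comm (1 / _ : ℝ), one_div] at h

end BohnenblustHille

theorem harmonic_le_harmonic_add_log {k m : ℕ} (hk : 0 < k) (hkm : k ≤ m) :
    (harmonic m : ℝ) ≤ harmonic k + log (m / k) := by
  have h := strictAnti_eulerMascheroniSeq'.antitone hkm
  have hm := hk.trans_le hkm
  simp only [eulerMascheroniSeq', hk.ne', hm.ne', if_false] at h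
  rw [log_div (by positivity) (by positivity)]
  linarith

theorem rpow_harmonic_le {c : ℝ} (hc : 1 ≤ c) {k m : ℕ} (hk : 0 < k) (hkm : k ≤ m) :
    c ^ (harmonic m : ℝ) ≤ c ^ (harmonic k : ℝ) * (m / k : ℝ) ^ log c := by
  have hm := hk.trans_le hkm
  have hc0 : 0 < c := by positivity
  calc c ^ (harmonic m : ℝ) ≤ c ^ (harmonic k + log (m / k)) :=
        rpow_le_rpow_of_exponent_le hc (harmonic_le_harmonic_add_log hk hkm)
    _ = c ^ (harmonic k : ℝ) * (m / k : ℝ) ^ log c := by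
        rw [rpow_add hc0, rpow_def_of_pos hc0 (log _), rpow_def_of_pos (by positivity) (log c),
          mul_comm (log c)]

theorem sqrt_eight_div_pi_le : √(8 / π) ≤ 8 / 5 := by
  rw [sqrt_le_left (by norm_num), div_le_iff₀ pi_pos]
  linarith [pi_gt_d2]

theorem log_eight_fifths_le : log (8 / 5) ≤ 0.526322 := by
  rw [log_le_iff_le_exp (by norm_num)]
  refine le_trans ?_ (quadratic_le_exp_of_nonneg (by norm_num))
  norm_num

theorem rpow_harmonic_four_le :
    (8 / 5 : ℝ) ^ (harmonic 4 : ℝ) ≤ 1.310883 * 4 ^ (0.526322 : ℝ) := by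
  have h4 : ((harmonic 4 : ℚ) : ℝ) = 25 / 12 := by
    norm_num [harmonic, Finset.sum_range_succ]
  have left : (8 / 5 : ℝ) ^ (25 / 12 : ℝ) ≤ 2.665 := by
    rw [div_eq_mul_inv (25 : ℝ), rpow_mul (by norm_num), rpow_ofNat,
      rpow_inv_le_iff_of_pos (by norm_num) (by norm_num) (by norm_num), rpow_ofNat]
    norm_num
  have right : (2.04 : ℝ) ≤ 4 ^ (0.526322 : ℝ) := by
    calc (2.04 : ℝ) ≤ ((4 : ℝ) ^ (21 : ℝ)) ^ (40 : ℝ)⁻¹ := by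
          rw [le_rpow_inv_iff_of_pos (by norm_num) (by norm_num) (by norm_num), rpow_ofNat,
            rpow_ofNat]
          norm_num
      _ ≤ 4 ^ (0.526322 : ℝ) := by
          rw [← rpow_mul (by norm_num)]
          gcongr <;> norm_num
  rw [h4]
  linarith

theorem rpow_harmonic_le_mul_rpow {m : ℕ} (hm : 4 ≤ m) :
    √(8 / π) ^ (harmonic m : ℝ) ≤ 1.310883 * (m : ℝ) ^ (0.526322 : ℝ) := by
  have : 1 ≤ (m / (4 : ℕ) : ℝ) := by
    rw [one_le_div (by norm_num)]
    exact_mod_cast hm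
  have hH : (0 : ℝ) ≤ harmonic m := by
    exact_mod_cast Finset.sum_nonneg fun i _ => by positivity
  calc √(8 / π) ^ (harmonic m : ℝ) ≤ (8 / 5) ^ (harmonic m : ℝ) :=
        rpow_le_rpow (sqrt_nonneg _) sqrt_eight_div_pi_le hH
    _ ≤ (8 / 5) ^ (harmonic 4 : ℝ) * (m / (4 : ℕ)) ^ log (8 / 5) :=
        rpow_harmonic_le (by norm_num) (by norm_num) hm
    _ ≤ (1.310883 * 4 ^ (0.526322 : ℝ)) * (m / (4 : ℕ)) ^ (0.526322 : ℝ) := by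
        gcongr
        · exact rpow_harmonic_four_le
        · exact log_eight_fifths_le
    _ = 1.310883 * (m : ℝ) ^ (0.526322 : ℝ) := by
        rw [mul_assoc, ← mul_rpow (by norm_num) (by positivity)]
        congr 2
        push_cast
        ring

theorem stmt6_general {n : ℕ} (hn : 5 ≤ n) {N : ℕ}
    (U : ContinuousMultilinearMap ℝ (fun _ : Fin n => (Fin N → ℝ)) ℝ) :
    BHreal n N U ≤ 1.310883 * ((n : ℝ) - 1) ^ (0.526322 : ℝ) * ‖U‖ := by
  obtain ⟨m, rfl⟩ : ∃ m, n = m + 1 := ⟨n - 1, by omega⟩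
  refine (BHreal_succ_le_rpow_harmonic m U).trans ?_
  gcongr
  simpa using rpow_harmonic_le_mul_rpow (by omega : 4 ≤ m)

theorem stmt6 (n : ℕ) (hn : 2 ^ 6 < n) (N : ℕ) (hN : 0 < N)
    (U : ContinuousMultilinearMap ℝ (fun _ : Fin n => (Fin N → ℝ)) ℝ) :
    BHreal n N U ≤ 1.310883 * ((n : ℝ) - 1) ^ (0.526322 : ℝ) * ‖U‖ :=
  stmt6_general (by omega) U
end
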